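/- arXiv:1812.09753 — 3 statements merged into one kernel-verified Lean document; each statement's English description precedes it below -/
import Mathlib

section
/- Let n ≥ 2 and 0 < D ≤ π/2. Then every D-maximal set C ⊆ S^n is spherically convex. -/
/-!
Write `c = cos D ≥ 0`, so that the condition `diam X ≤ D` says `⟨x, y⟩ ≥ c` for all `x, y ∈ X`.

Let `K` be the closed convex hull of `C` in `ℝ^{n+1}`. Since `c ≥ 0`, the circular cones
`{l : c‖l‖ ≤ ⟨y, l⟩}` are closed and convex (`convex_circularCone`); applying this first with
`y ∈ C` and then with an arbitrary element of `K` gives `⟨k, l⟩ ≥ c‖k‖‖l‖` for all `k, l ∈ K`.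
Points of `C` are pairwise non-obtuse, so by compactness a finite sum of them is the pole of an open
hemisphere containing `C` (`exists_pole`); hence `0 ∉ K`, and the radial projection of `K` to
the sphere is a compact set of diameter at most `D` containing `C`.

It remains to see that this projection is no larger than `C`. Small balls are admissible, so `C`
has positive volume (`DMaximal.pos`) and lies in no great subsphere (`sphVol_hyperplane`); hence the
convex cone over `K` has nonempty interior and is contained in the closure of it. A point of the
projection outside `C` would therefore yield a nonempty open piece of the projection missing `C`.
Nonempty open sets have positive volume (`sphVol_pos`) and the total volume is finite
(`sphVol_lt_top`), so this contradicts maximality. These facts on the Hausdorff measure come from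
comparing the sphere with its tangent hyperplanes, where Hausdorff measure is a Haar measure,
through orthogonal projection and its local inverse `chartInv`.
-/


open MeasureTheory

noncomputable section

/-- Euclidean space `ℝ^{n+1}`. -/
abbrev Esp (n : ℕ) : Type := EuclideanSpace ℝ (Fin (n + 1))

/-- The unit sphere `S^n ⊆ ℝ^{n+1}`, as a subtype. -/
abbrev Sph (n : ℕ) : Type := Metric.sphere (0 : Esp n) 1

/-- Geodesic distance `d(x,y) = arccos ⟨x,y⟩` on the sphere. -/
def gd {n : ℕ} (x y : Sph n) : ℝ :=
  Real.arccos (inner (𝕜 := ℝ) (x : Esp n) (y : Esp n))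

/-- Closed geodesic ball `B(z,r) = {x ∈ Sⁿ : d(x,z) ≤ r}`. -/
def sphBall {n : ℕ} (z : Sph n) (r : ℝ) : Set (Sph n) := {x | gd x z ≤ r}

/-- Geodesic diameter `diam X = sup {d(x,y) : x, y ∈ X}`. -/
def sphDiam {n : ℕ} (X : Set (Sph n)) : ℝ :=
  sSup {r | ∃ x ∈ X, ∃ y ∈ X, r = gd x y}

/-- Spherical volume: the `n`-dimensional (Hausdorff) surface measure on `S^n`. -/
def sphVol (n : ℕ) : Measure (Sph n) := μH[(n : ℝ)]

/-- A set `C ⊆ S^n` is `D`-maximal: compact, of geodesic diameter at most `D`, and of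
maximal spherical volume among compact sets of diameter at most `D`. -/
def DMaximal (n : ℕ) (D : ℝ) (C : Set (Sph n)) : Prop :=
  IsCompact C ∧ sphDiam C ≤ D ∧
    sphVol n C =
      sSup {v | ∃ X : Set (Sph n), IsCompact X ∧ sphDiam X ≤ D ∧ v = sphVol n X}

/-- `K ⊆ S^n` is spherically convex: it lies in an open hemisphere and the cone
`{t • x : t ≥ 0, x ∈ K}` is convex in `ℝ^{n+1}`. -/
def SphConvex {n : ℕ} (K : Set (Sph n)) : Prop :=
  (∃ w : Esp n, w ≠ 0 ∧ ∀ x ∈ K, 0 < inner (𝕜 := ℝ) (x : Esp n) w) ∧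
    Convex ℝ {p : Esp n | ∃ t : ℝ, 0 ≤ t ∧ ∃ x ∈ K, p = t • (x : Esp n)}

open Metric Set Topology Module
open scoped Pointwise

/-! ### Hausdorff measure on the sphere -/

lemma finrank_orth {n : ℕ} {w : Esp n} (hw : w ≠ 0) :
    finrank ℝ (Submodule.span ℝ {w})ᗮ = n := by
  have : Fact (finrank ℝ (Esp n) = n + 1) := ⟨by simp⟩
  exact Submodule.finrank_orthogonal_span_singleton hw

lemma isAddHaar_orth {n : ℕ} {w : Esp n} (hw : w ≠ 0) :
    Measure.IsAddHaarMeasure (μH[(n : ℝ)] : Measure (Submodule.span ℝ {w})ᗮ) := by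
  have h := isAddHaarMeasure_hausdorffMeasure (E := (Submodule.span ℝ {w})ᗮ)
  rwa [finrank_orth hw] at h

lemma sph_ne_zero {n : ℕ} (x : Sph n) : (x : Esp n) ≠ 0 := ne_zero_of_mem_unit_sphere x

lemma sph_norm {n : ℕ} (x : Sph n) : ‖(x : Esp n)‖ = 1 := norm_eq_of_mem_sphere x

/-- The inverse of the orthogonal projection of the open hemisphere centred at `x` onto `xᗮ`. -/
def chartInv {n : ℕ} (x : Sph n) (y : (Submodule.span ℝ {(x : Esp n)})ᗮ) : Esp n :=
  (y : Esp n) + √(1 - ‖y‖ ^ 2) • (x : Esp n)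

lemma chartInv_zero {n : ℕ} (x : Sph n) : chartInv x 0 = x := by simp [chartInv]

lemma inner_orth {n : ℕ} {x : Esp n} (y : (Submodule.span ℝ {x})ᗮ) :
    inner ℝ (y : Esp n) x = 0 :=
  Submodule.mem_orthogonal_singleton_iff_inner_left.1 y.2

lemma norm_chartInv {n : ℕ} (x : Sph n) (y : (Submodule.span ℝ {(x : Esp n)})ᗮ)
    (hy : ‖y‖ ≤ 1) : ‖chartInv x y‖ = 1 := by
  have h1 : ‖chartInv x y‖ ^ 2 = 1 := by
    rw [chartInv, norm_add_sq_real, inner_smul_right, inner_orth, norm_smul, sph_norm,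
      Real.norm_eq_abs, mul_one, sq_abs, Real.sq_sqrt (by nlinarith [norm_nonneg y])]
    simp
  nlinarith [norm_nonneg (chartInv x y)]

lemma proj_chartInv {n : ℕ} (x : Sph n) (y : (Submodule.span ℝ {(x : Esp n)})ᗮ) :
    (Submodule.span ℝ {(x : Esp n)})ᗮ.orthogonalProjectionOnto (chartInv x y) = y := by
  rw [chartInv, map_add, map_smul, Submodule.orthogonalProjectionOnto_mem_subspace_eq_self,
    Submodule.orthogonalProjectionOnto_orthogonal_apply_eq_zero
      (Submodule.mem_span_singleton_self _)]
  simp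

lemma chartInv_proj {n : ℕ} (x z : Sph n) (hz : 0 < inner ℝ (x : Esp n) (z : Esp n)) :
    chartInv x ((Submodule.span ℝ {(x : Esp n)})ᗮ.orthogonalProjectionOnto (z : Esp n)) = z := by
  set y := (Submodule.span ℝ {(x : Esp n)})ᗮ.orthogonalProjectionOnto (z : Esp n) with hy
  have h1 : (y : Esp n) + inner ℝ (x : Esp n) (z : Esp n) • (x : Esp n) = z := by
    have h2 := Submodule.starProjection_add_starProjection_orthogonal
      (K := Submodule.span ℝ {(x : Esp n)}) (z : Esp n)
    rw [Submodule.starProjection_unit_singleton ℝ (sph_norm x)] at h2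
    rw [add_comm]
    exact h2
  have h3 : ‖y‖ ^ 2 + inner ℝ (x : Esp n) (z : Esp n) ^ 2 = 1 := by
    have h4 : ‖(z : Esp n)‖ ^ 2 = 1 := by rw [sph_norm]; norm_num
    rw [← h1, norm_add_sq_real, inner_smul_right, inner_orth, norm_smul, sph_norm,
      Real.norm_eq_abs, mul_one, sq_abs] at h4
    simpa using h4
  have h5 : √(1 - ‖y‖ ^ 2) = inner ℝ (x : Esp n) (z : Esp n) := by
    rw [← eq_sub_iff_add_eq'.2 h3, Real.sqrt_sq hz.le]
  rw [chartInv, h5, h1]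

lemma continuous_chartInv {n : ℕ} (x : Sph n) : Continuous (chartInv x) := by
  unfold chartInv; fun_prop

/-- Projecting onto the tangent hyperplane does not increase Hausdorff measure, and the
projection of an open set contains a neighbourhood of the origin there. -/
lemma sphVol_pos {n : ℕ} {U : Set (Sph n)} (hU : IsOpen U) (hne : U.Nonempty) :
    0 < sphVol n U := by
  obtain ⟨x, hx⟩ := hne
  obtain ⟨O, hO, rfl⟩ := isOpen_induced_iff.1 hU
  have := isAddHaar_orth (sph_ne_zero x)
  set W := (Submodule.span ℝ {(x : Esp n)})ᗮ with hW
  let f : Sph n → W := fun z => W.orthogonalProjectionOnto (z : Esp n)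
  have hf : LipschitzWith 1 f := by
    have := W.lipschitzWith_orthogonalProjectionOnto.comp
      (LipschitzWith.subtype_val (sphere (0 : Esp n) 1))
    rwa [one_mul] at this
  have hle := hf.hausdorffMeasure_image_le (d := (n : ℝ)) (by positivity)
    (Subtype.val ⁻¹' O : Set (Sph n))
  have hnhds : f '' (Subtype.val ⁻¹' O : Set (Sph n)) ∈ 𝓝 (0 : W) := by
    have h1 : ∀ᶠ y in 𝓝 (0 : W), chartInv x y ∈ O :=
      (continuous_chartInv x).continuousAt.eventually (by
        rw [chartInv_zero]; exact hO.mem_nhds hx)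
    have h2 : ∀ᶠ y in 𝓝 (0 : W), y ∈ closedBall (0 : W) 1 := closedBall_mem_nhds _ one_pos
    filter_upwards [h1, h2] with y hy1 hy2
    have hn := norm_chartInv x y (by simpa using hy2)
    exact ⟨⟨chartInv x y, by simpa using hn⟩, hy1, proj_chartInv x y⟩
  have hpos := Measure.measure_pos_of_mem_nhds (μH[(n : ℝ)] : Measure W) hnhds
  simpa [sphVol] using hpos.trans_le hle

/-- Near each point the sphere is a Lipschitz image of a bounded piece of the tangent
hyperplane. -/
lemma sphVol_locallyFinite {n : ℕ} (x : Sph n) : ∃ s ∈ 𝓝 x, sphVol n s < ⊤ := by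
  have := isAddHaar_orth (sph_ne_zero x)
  set W := (Submodule.span ℝ {(x : Esp n)})ᗮ with hW
  let f : Sph n → W := fun z => W.orthogonalProjectionOnto (z : Esp n)
  have hfc : Continuous f := W.orthogonalProjectionOnto.continuous.comp continuous_subtype_val
  have hg : ContDiffAt ℝ 1 (chartInv x) (0 : W) := by
    unfold chartInv
    have h1 : ContDiffAt ℝ 1 (fun y : W => (y : Esp n)) 0 := W.subtypeL.contDiff.contDiffAt
    have h2 : ContDiffAt ℝ 1 (fun y : W => 1 - ‖y‖ ^ 2) 0 :=
      contDiffAt_const.sub (contDiff_norm_sq ℝ).contDiffAt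
    exact h1.add ((h2.sqrt (by simp)).smul contDiffAt_const)
  obtain ⟨K, t, ht, hK⟩ := hg.exists_lipschitzOnWith
  have hfx : f x = 0 :=
    Submodule.orthogonalProjectionOnto_orthogonal_apply_eq_zero
      (Submodule.mem_span_singleton_self _)
  refine ⟨{z | f z ∈ t ∩ closedBall 0 1 ∧ 0 < inner ℝ (x : Esp n) (z : Esp n)}, ?_, ?_⟩
  · have h1 : ∀ᶠ z in 𝓝 x, f z ∈ t ∩ closedBall 0 1 :=
      hfc.continuousAt.eventually (by
        rw [hfx]; exact Filter.inter_mem ht (closedBall_mem_nhds _ one_pos))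
    have h2 : ∀ᶠ z : Sph n in 𝓝 x, 0 < inner ℝ (x : Esp n) (z : Esp n) := by
      have hc : Continuous fun z : Sph n => inner ℝ (x : Esp n) (z : Esp n) := by fun_prop
      refine hc.continuousAt.eventually (lt_mem_nhds ?_)
      simp
    exact h1.and h2
  · have hle := (hK.mono (inter_subset_left (t := closedBall 0 1))).hausdorffMeasure_image_le
      (d := (n : ℝ)) (by positivity)
    have hfin : (μH[(n : ℝ)] : Measure W) (t ∩ closedBall 0 1) < ⊤ :=
      (measure_mono inter_subset_right).trans_lt (isCompact_closedBall _ _).measure_lt_top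
    have h3 : (K : ENNReal) ^ (n : ℝ) * (μH[(n : ℝ)] : Measure W) (t ∩ closedBall 0 1) < ⊤ :=
      ENNReal.mul_lt_top (ENNReal.rpow_lt_top_of_nonneg (by positivity) (by simp)) hfin
    refine lt_of_le_of_lt ?_ h3
    refine le_trans ?_ hle
    rw [sphVol, ← (isometry_subtype_coe (s := sphere (0 : Esp n) 1)).hausdorffMeasure_image
      (Or.inl (by positivity))]
    refine measure_mono ?_
    rintro _ ⟨z, ⟨hz1, hz2⟩, rfl⟩
    exact ⟨f z, hz1, chartInv_proj x z hz2⟩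

lemma sphVol_lt_top {n : ℕ} (s : Set (Sph n)) : sphVol n s < ⊤ := by
  have : IsLocallyFiniteMeasure (sphVol n) := ⟨sphVol_locallyFinite⟩
  exact (measure_mono (subset_univ s)).trans_lt isCompact_univ.measure_lt_top

/-- A great subsphere is null, being the unit sphere of an `n`-dimensional space on which
`n`-dimensional Hausdorff measure is a Haar measure. -/
lemma sphVol_hyperplane {n : ℕ} {w : Esp n} (hw : w ≠ 0) :
    sphVol n {z : Sph n | inner ℝ (z : Esp n) w = 0} = 0 := by
  have := isAddHaar_orth hw
  set W := (Submodule.span ℝ {w})ᗮ with hW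
  rw [sphVol, ← (isometry_subtype_coe (s := sphere (0 : Esp n) 1)).hausdorffMeasure_image
      (Or.inl (by positivity))]
  have h0 : (μH[(n : ℝ)] : Measure W) (sphere 0 1) = 0 :=
    Measure.addHaar_sphere_of_ne_zero _ _ one_ne_zero
  rw [← (isometry_subtype_coe (s := (W : Set (Esp n)))).hausdorffMeasure_image
      (Or.inl (by positivity))] at h0
  refine measure_mono_null ?_ h0
  rintro _ ⟨z, hz, rfl⟩
  refine ⟨⟨z, Submodule.mem_orthogonal_singleton_iff_inner_left.2 hz⟩, ?_, rfl⟩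
  simp

/-! ### Diameter bounds as inner product bounds -/

lemma gd_le_iff {n : ℕ} {D : ℝ} (hD0 : 0 ≤ D) (hD : D ≤ Real.pi) (x y : Sph n) :
    gd x y ≤ D ↔ Real.cos D ≤ inner ℝ (x : Esp n) (y : Esp n) := by
  have h := abs_le.1 (abs_real_inner_le_norm (x : Esp n) (y : Esp n))
  rw [sph_norm, sph_norm, mul_one] at h
  rw [gd, ← Real.strictAntiOn_cos.le_iff_ge ⟨hD0, hD⟩
    ⟨Real.arccos_nonneg _, Real.arccos_le_pi _⟩, Real.cos_arccos h.1 h.2]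

lemma sphDiam_le_iff {n : ℕ} {D : ℝ} (hD0 : 0 ≤ D) (hD : D ≤ Real.pi) (X : Set (Sph n)) :
    sphDiam X ≤ D ↔
      ∀ x ∈ X, ∀ y ∈ X, Real.cos D ≤ inner ℝ (x : Esp n) (y : Esp n) := by
  constructor
  · intro h x hx y hy
    rw [← gd_le_iff hD0 hD]
    have hb : BddAbove {r | ∃ x ∈ X, ∃ y ∈ X, r = gd x y} := by
      refine ⟨Real.pi, ?_⟩
      rintro _ ⟨a, -, b, -, rfl⟩
      exact Real.arccos_le_pi _
    exact (le_csSup hb ⟨x, hx, y, hy, rfl⟩).trans h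
  · intro h
    refine Real.sSup_le ?_ hD0
    rintro _ ⟨x, hx, y, hy, rfl⟩
    exact (gd_le_iff hD0 hD x y).2 (h x hx y hy)

/-- A small closed ball is admissible, so the supremum of volumes is positive. -/
lemma DMaximal.pos {n : ℕ} {D : ℝ} (hD0 : 0 < D) (hD : D ≤ Real.pi) {C : Set (Sph n)}
    (hC : DMaximal n D C) : 0 < sphVol n C := by
  obtain ⟨z⟩ : Nonempty (Sph n) :=
    (NormedSpace.sphere_nonempty.2 zero_le_one : (sphere (0 : Esp n) 1).Nonempty).to_subtype
  have hcos : Real.cos D < 1 := by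
    rw [← Real.cos_zero]
    exact Real.cos_lt_cos_of_nonneg_of_le_pi le_rfl hD hD0
  set r := √((1 - Real.cos D) / 2) with hr
  have hr0 : 0 < r := Real.sqrt_pos.2 (by linarith)
  have hr2 : r ^ 2 = (1 - Real.cos D) / 2 := Real.sq_sqrt (by linarith)
  have hdiam : sphDiam (closedBall z r) ≤ D := by
    rw [sphDiam_le_iff hD0.le hD]
    intro x hx y hy
    have h1 : ‖(x : Esp n) - y‖ ≤ 2 * r := by
      have := dist_triangle_right x y z
      rw [Subtype.dist_eq, dist_eq_norm] at this
      have hx' := mem_closedBall.1 hx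
      have hy' := mem_closedBall.1 hy
      linarith
    have h2 := norm_sub_sq_real (x : Esp n) (y : Esp n)
    rw [sph_norm, sph_norm] at h2
    have h3 : ‖(x : Esp n) - y‖ ^ 2 ≤ (2 * r) ^ 2 := by gcongr
    nlinarith
  rw [hC.2.2]
  refine lt_of_lt_of_le ?_ (le_sSup ⟨closedBall z r, isCompact_closedBall z r, hdiam, rfl⟩)
  exact (sphVol_pos isOpen_ball ⟨z, mem_ball_self hr0⟩).trans_le
    (measure_mono ball_subset_closedBall)

/-! ### Convexity -/

lemma convex_circularCone {n : ℕ} {a : ℝ} (ha : 0 ≤ a) (v : Esp n) :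
    Convex ℝ {l : Esp n | a * ‖l‖ ≤ inner ℝ v l} := by
  intro x hx y hy s t hs ht _
  simp only [mem_ofPred_eq] at *
  rw [inner_add_right, inner_smul_right, inner_smul_right]
  have h := norm_add_le (s • x) (t • y)
  rw [norm_smul, norm_smul, Real.norm_of_nonneg hs, Real.norm_of_nonneg ht] at h
  nlinarith [mul_le_mul_of_nonneg_left h ha, mul_le_mul_of_nonneg_left hx hs,
    mul_le_mul_of_nonneg_left hy ht]

lemma isClosed_circularCone {n : ℕ} (a : ℝ) (v : Esp n) :
    IsClosed {l : Esp n | a * ‖l‖ ≤ inner ℝ v l} :=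
  isClosed_le (by fun_prop) (by fun_prop)

/-- The cone `{t • k : t ≥ 0, k ∈ K}` over `K`. -/
def rayCone {n : ℕ} (K : Set (Esp n)) : Set (Esp n) :=
  {p | ∃ t : ℝ, 0 ≤ t ∧ ∃ k ∈ K, p = t • k}

lemma convex_rayCone {n : ℕ} {K : Set (Esp n)} (hK : Convex ℝ K) : Convex ℝ (rayCone K) := by
  rintro _ ⟨t, ht, k, hk, rfl⟩ _ ⟨s, hs, l, hl, rfl⟩ a b ha hb _
  have h1 : 0 ≤ a * t := by positivity
  have h2 : 0 ≤ b * s := by positivity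
  rcases (add_nonneg h1 h2).eq_or_lt with h | h
  · refine ⟨0, le_rfl, k, hk, ?_⟩
    rw [smul_smul, smul_smul, (by linarith : a * t = 0), (by linarith : b * s = 0)]
    simp
  · refine ⟨a * t + b * s, h.le, (a * t / (a * t + b * s)) • k + (b * s / (a * t + b * s)) • l,
      hK hk hl (by positivity) (by positivity) (by field_simp), ?_⟩
    rw [smul_add, smul_smul, smul_smul, smul_smul, smul_smul, mul_div_cancel₀ _ h.ne',
      mul_div_cancel₀ _ h.ne']

lemma smul_mem_interior_rayCone {n : ℕ} {K : Set (Esp n)} {a : ℝ} (ha : 0 < a) {p : Esp n}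
    (hp : p ∈ interior (rayCone K)) : a • p ∈ interior (rayCone K) := by
  have hsub : a • interior (rayCone K) ⊆ rayCone K := by
    rintro _ ⟨q, hq, rfl⟩
    obtain ⟨t, ht, k, hk, rfl⟩ := interior_subset hq
    exact ⟨a * t, by positivity, k, hk, smul_smul _ _ _⟩
  exact interior_maximal hsub (isOpen_interior.smul₀ ha.ne') (smul_mem_smul_set hp)

/-- A compact set of pairwise non-obtuse unit vectors lies in an open hemisphere: a sum of
finitely many of its points is a suitable pole. -/
lemma exists_pole {n : ℕ} {C : Set (Sph n)} (hC : IsCompact C)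
    (h : ∀ x ∈ C, ∀ y ∈ C, 0 ≤ inner ℝ (x : Esp n) (y : Esp n)) :
    ∃ w : Esp n, ∀ x ∈ C, 0 < inner ℝ w (x : Esp n) := by
  obtain ⟨t, hcov⟩ := hC.elim_nhds_subcover'
    (fun x _ => {y : Sph n | 0 < inner ℝ (x : Esp n) (y : Esp n)}) (by
      intro x _
      have hc : Continuous fun y : Sph n => inner ℝ (x : Esp n) (y : Esp n) := by fun_prop
      refine hc.continuousAt.eventually (lt_mem_nhds ?_)
      simp)
  refine ⟨∑ x ∈ t, ((x : Sph n) : Esp n), fun y hy => ?_⟩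
  rw [sum_inner]
  obtain ⟨x, hx, hxy⟩ := mem_iUnion₂.1 (hcov hy)
  exact Finset.sum_pos' (fun z _ => h z z.2 y hy) ⟨x, hx, hxy⟩

/-- for `0 < D ≤ π/2`, every `D`-maximal set is spherically convex. -/
theorem DMaximal_sphConvex (n : ℕ) (hn : 2 ≤ n) (D : ℝ) (hD0 : 0 < D)
    (hD1 : D ≤ Real.pi / 2) (C : Set (Sph n)) (hC : DMaximal n D C) :
    SphConvex C := by
  have hDpi : D ≤ Real.pi := by linarith [Real.pi_pos]
  have hc0 : 0 ≤ Real.cos D := Real.cos_nonneg_of_mem_Icc ⟨by linarith [Real.pi_pos], hD1⟩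
  set c := Real.cos D with hc
  have hCpos := hC.pos hD0 hDpi
  obtain ⟨hCc, hCd, hCmax⟩ := hC
  have hpair := (sphDiam_le_iff hD0.le hDpi C).1 hCd
  have hne : C.Nonempty := nonempty_of_measure_ne_zero hCpos.ne'
  obtain ⟨w, hw⟩ := exists_pole hCc fun x hx y hy => hc0.trans (hpair x hx y hy)
  obtain ⟨x₀, hx₀, hmin⟩ := hCc.exists_isMinOn hne
    (f := fun x : Sph n => inner ℝ w (x : Esp n)) (by fun_prop)
  have hw0 : w ≠ 0 := by
    rintro rfl
    simpa using hw x₀ hx₀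
  set K : Set (Esp n) := closedConvexHull ℝ (Subtype.val '' C) with hK
  have hKconv : Convex ℝ K := convex_closedConvexHull
  have hCK : ∀ x ∈ C, (x : Esp n) ∈ K := fun x hx =>
    subset_closedConvexHull (mem_image_of_mem _ hx)
  have hKmin : ∀ A : Set (Esp n), Convex ℝ A → IsClosed A → (∀ x ∈ C, (x : Esp n) ∈ A) →
      K ⊆ A := fun A h1 h2 h3 => closedConvexHull_min (image_subset_iff.2 h3) h1 h2
  have hKcompact : IsCompact K := by
    refine isCompact_of_isClosed_isBounded isClosed_closedConvexHull
      ((isBounded_closedBall (x := (0 : Esp n)) (r := 1)).subset ?_)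
    refine hKmin _ (convex_closedBall _ _) isClosed_closedBall fun x _ => ?_
    simp
  have hK0 : ∀ k ∈ K, k ≠ 0 := by
    rintro _ hk rfl
    have h : K ⊆ {k | inner ℝ w (x₀ : Esp n) ≤ inner ℝ w k} :=
      hKmin _ (convex_halfSpace_ge (innerSL ℝ w).isLinear _)
        (isClosed_le (by fun_prop) (by fun_prop)) fun x hx => hmin hx
    have hle := h hk
    simp only [mem_ofPred_eq, inner_zero_right] at hle
    exact absurd (hw x₀ hx₀) (not_lt.2 hle)
  -- The bound on angles passes from `C` to its hull in one argument, then in the other.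
  have hKC : ∀ y ∈ C, ∀ k ∈ K, c * ‖k‖ ≤ inner ℝ (y : Esp n) k := fun y hy =>
    hKmin {l | c * ‖l‖ ≤ inner ℝ (y : Esp n) l} (convex_circularCone hc0 _)
      (isClosed_circularCone _ _) fun x hx => by
      rw [mem_ofPred_eq, sph_norm, mul_one]
      exact hpair y hy x hx
  have hKK : ∀ k ∈ K, ∀ l ∈ K, c * ‖k‖ * ‖l‖ ≤ inner ℝ k l := fun k hk =>
    hKmin {l | c * ‖k‖ * ‖l‖ ≤ inner ℝ k l} (convex_circularCone (by positivity) _)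
      (isClosed_circularCone _ _) fun x hx => by
      have := hKC x hx k hk
      rw [real_inner_comm] at this
      rwa [mem_ofPred_eq, sph_norm, mul_one]
  -- The competitor of `C`: the radial projection `range N` of the hull to the sphere.
  let N : K → Sph n := fun k => ⟨‖(k : Esp n)‖⁻¹ • (k : Esp n), by
    simp [norm_smul, hK0 k k.2]⟩
  have hNcont : Continuous N := by
    refine Continuous.subtype_mk ?_ _
    exact (continuous_subtype_val.norm.inv₀ fun k => norm_ne_zero_iff.2 (hK0 k k.2)).smul
      continuous_subtype_val
  have : CompactSpace K := isCompact_iff_compactSpace.1 hKcompact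
  have hNc : IsCompact (range N) := isCompact_range hNcont
  have hNd : sphDiam (range N) ≤ D := by
    rw [sphDiam_le_iff hD0.le hDpi]
    rintro _ ⟨k, rfl⟩ _ ⟨l, rfl⟩
    have hk := norm_pos_iff.2 (hK0 k k.2)
    have hl := norm_pos_iff.2 (hK0 l l.2)
    have h := hKK k k.2 l l.2
    simp only [N, inner_smul_left, inner_smul_right, map_inv₀, conj_trivial]
    rw [← hc, ← div_eq_inv_mul, ← div_eq_inv_mul, div_div, le_div_iff₀ (by positivity)]
    linarith
  have hmem : ∀ x : Sph n, (x : Esp n) ∈ rayCone K → x ∈ range N := by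
    rintro x ⟨t, ht, k, hk, hx⟩
    refine ⟨⟨k, hk⟩, Subtype.ext ?_⟩
    have h1 := sph_norm x
    rw [hx, norm_smul, Real.norm_of_nonneg ht] at h1
    simp only [N]
    rw [hx, eq_inv_of_mul_eq_one_left h1]
  have hCcone : ∀ x ∈ C, (x : Esp n) ∈ rayCone K := fun x hx =>
    ⟨1, zero_le_one, x, hCK x hx, (one_smul _ _).symm⟩
  have hcone := convex_rayCone hKconv
  -- Otherwise `C` would lie in a great subsphere and have volume zero.
  have hint : (interior (rayCone K)).Nonempty := by
    rw [hcone.interior_nonempty_iff_affineSpan_eq_top]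
    by_contra hspan
    have h0 : (0 : Esp n) ∈ affineSpan ℝ (rayCone K) :=
      subset_affineSpan ℝ _ ⟨0, le_rfl, x₀, hCK x₀ hx₀, (zero_smul _ _).symm⟩
    rw [← AffineSubspace.direction_eq_top_iff_of_nonempty ⟨0, h0⟩,
      ← Submodule.orthogonal_eq_bot_iff] at hspan
    obtain ⟨v, hv, hv0⟩ := Submodule.exists_mem_ne_zero_of_ne_bot hspan
    refine hCpos.ne' (measure_mono_null ?_ (sphVol_hyperplane hv0))
    intro x hx
    have h1 := AffineSubspace.vsub_mem_direction (subset_affineSpan ℝ _ (hCcone x hx)) h0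
    rw [vsub_eq_sub, sub_zero] at h1
    exact hv _ h1
  have hNC : ∀ x : Sph n, (x : Esp n) ∈ rayCone K → x ∈ C := by
    intro x hx
    by_contra hxC
    -- `V` is an open part of the hull that `C` misses; it is nonempty because `x` is a limit of
    -- interior points of the cone, so the hull would have larger volume than `C`.
    let V : Set (Sph n) := Cᶜ ∩ Subtype.val ⁻¹' interior (rayCone K)
    have hVo : IsOpen V :=
      hCc.isClosed.isOpen_compl.inter (isOpen_interior.preimage continuous_subtype_val)
    have hVne : V.Nonempty := by
      have hxcl : (x : Esp n) ∈ closure (interior (rayCone K)) := by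
        rw [hcone.closure_interior_eq_closure_of_nonempty_interior hint]
        exact subset_closure hx
      obtain ⟨O, hO, hOC⟩ := isOpen_induced_iff.1 hCc.isClosed.isOpen_compl
      have hφ : ContinuousAt (fun p : Esp n => ‖p‖⁻¹ • p) x :=
        (continuousAt_id.norm.inv₀ (by simp)).smul continuousAt_id
      have hφO : ∀ᶠ p in 𝓝 (x : Esp n), ‖p‖⁻¹ • p ∈ O := by
        refine hφ.eventually (hO.mem_nhds ?_)
        have : x ∈ Subtype.val ⁻¹' O := by rw [hOC]; exact hxC
        simpa using this
      obtain ⟨p, ⟨hpO, hp0⟩, hpi⟩ := mem_closure_iff_nhds.1 hxcl _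
        (hφO.and (eventually_ne_nhds (sph_ne_zero x)))
      have hnp : 0 < ‖p‖ := norm_pos_iff.2 hp0
      refine ⟨⟨‖p‖⁻¹ • p, by simp [norm_smul, hp0]⟩, ?_,
        smul_mem_interior_rayCone (inv_pos.2 hnp) hpi⟩
      rw [← hOC]
      exact hpO
    have hdisj : Disjoint C V := disjoint_compl_right.mono_right inter_subset_left
    have hCV : C ∪ V ⊆ range N := union_subset (fun x hx => hmem x (hCcone x hx))
      fun x hx => hmem x (interior_subset hx.2)
    have h1 : sphVol n C + sphVol n V ≤ sphVol n C := by
      rw [← measure_union hdisj hVo.measurableSet]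
      refine (measure_mono hCV).trans ?_
      rw [hCmax]
      exact le_sSup ⟨_, hNc, hNd, rfl⟩
    exact absurd h1 (not_le.2 (ENNReal.lt_add_right (sphVol_lt_top C).ne
      (sphVol_pos hVo hVne).ne'))
  refine ⟨⟨w, hw0, fun x hx => by rw [real_inner_comm]; exact hw x hx⟩, ?_⟩
  convert hcone using 1
  ext p
  constructor
  · rintro ⟨t, ht, x, hx, rfl⟩
    exact ⟨t, ht, x, hCK x hx, rfl⟩
  · rintro ⟨t, ht, k, hk, rfl⟩
    have hk0 := norm_ne_zero_iff.2 (hK0 k hk)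
    refine ⟨t * ‖k‖, by positivity, N ⟨k, hk⟩,
      hNC _ ⟨‖k‖⁻¹, by positivity, k, hk, rfl⟩, ?_⟩
    simp only [N]
    rw [smul_smul, mul_assoc, mul_inv_cancel₀ hk0, mul_one]
end
end

section
/- Let n ≥ 2, let u ∈ ℝ^{n+1} be a unit vector, and let X ⊆ S^n be a nonempty compact set with geodesic diameter diam X < π. Then the two-point symmetrization τ_H(X) is compact, σ(τ_H(X)) = σ(X), and diam τ_H(X) ≤ diam X. -/
/-!
The reflection `s` is an isometric involution of `S^n`, so it preserves Hausdorff measure and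
geodesic distances, and `twoPointSym u X` is built from `X` and `s⁻¹ X`.

Compactness: the symmetrization is a finite combination of closed sets in a compact space.

Volume: split along the open halves `P`, `N` and the equator. Since `s` swaps `P` and `N`, the
part in `N`, `X ∩ s⁻¹ X ∩ N`, has the volume of `X ∩ s⁻¹ X ∩ P`; together with
`(X ∪ s⁻¹ X) ∩ P` this gives `σ(X ∩ P) + σ(s⁻¹ X ∩ P) = σ(X ∩ P) + σ(X ∩ N)` by modularity
(`measure_union_add_inter`). On the equator `s` is the identity and nothing changes.

Diameter: for two points of the symmetrization there are always two points of `X` at least as far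
apart (`exists_gd_le`). The only case which is not an isometry argument is `x, s y ∈ X` with `x, y`
in the same half, where `⟨x, s y⟩ = ⟨x, y⟩ - 2⟨x, u⟩⟨y, u⟩ ≤ ⟨x, y⟩`.
-/

open MeasureTheory

noncomputable section

/-- Reflection of `ℝ^{n+1}` through the hyperplane orthogonal to `u`. -/
def reflMap {n : ℕ} (u : Esp n) (p : Esp n) : Esp n :=
  p - (2 * inner (𝕜 := ℝ) p u) • u

/-- Two-point symmetrization of `X ⊆ S^n` with respect to the unit vector `u`:
`τ_H(X) = ((X ∪ σ_H(X)) ∩ H⁺) ∪ ((X ∩ σ_H(X)) ∩ H⁻)` where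
`H⁺ = {⟨x,u⟩ ≥ 0}`, `H⁻ = {⟨x,u⟩ ≤ 0}` and `σ_H` is the reflection through `u^⊥`. -/
def twoPointSym {n : ℕ} (u : Esp n) (X : Set (Sph n)) : Set (Sph n) :=
  {x | (0 ≤ inner (𝕜 := ℝ) (x : Esp n) u ∧
          (x ∈ X ∨ reflMap u (x : Esp n) ∈ (((↑) '' X : Set (Esp n))))) ∨
       (inner (𝕜 := ℝ) (x : Esp n) u ≤ 0 ∧
          (x ∈ X ∧ reflMap u (x : Esp n) ∈ (((↑) '' X : Set (Esp n)))))}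

lemma inner_reflMap_right {n : ℕ} (u x y : Esp n) :
    inner ℝ x (reflMap u y) = inner ℝ x y - 2 * inner ℝ x u * inner ℝ y u := by
  simp only [reflMap, inner_sub_right, inner_smul_right]
  ring

lemma inner_reflMap_left {n : ℕ} (u x y : Esp n) :
    inner ℝ (reflMap u x) y = inner ℝ x y - 2 * inner ℝ x u * inner ℝ y u := by
  rw [real_inner_comm, inner_reflMap_right, real_inner_comm]
  ring

lemma inner_reflMap_self {n : ℕ} {u : Esp n} (hu : ‖u‖ = 1) (x : Esp n) :
    inner ℝ (reflMap u x) u = -inner ℝ x u := by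
  rw [inner_reflMap_left, real_inner_self_eq_norm_sq, hu]
  ring

lemma inner_reflMap_reflMap {n : ℕ} {u : Esp n} (hu : ‖u‖ = 1) (x y : Esp n) :
    inner ℝ (reflMap u x) (reflMap u y) = inner ℝ x y := by
  rw [inner_reflMap_right, inner_reflMap_self hu, inner_reflMap_left]
  ring

lemma reflMap_reflMap {n : ℕ} {u : Esp n} (hu : ‖u‖ = 1) (x : Esp n) :
    reflMap u (reflMap u x) = x := by
  conv_lhs => rw [reflMap]
  rw [inner_reflMap_self hu, reflMap]
  module

lemma norm_reflMap {n : ℕ} {u : Esp n} (hu : ‖u‖ = 1) (x : Esp n) :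
    ‖reflMap u x‖ = ‖x‖ := by
  rw [norm_eq_sqrt_real_inner, inner_reflMap_reflMap hu, ← norm_eq_sqrt_real_inner]

lemma reflMap_sub {n : ℕ} (u x y : Esp n) :
    reflMap u x - reflMap u y = reflMap u (x - y) := by
  simp only [reflMap, inner_sub_left]
  module

/-- The reflection through `u^⊥` as an isometric involution of the sphere. -/
def sphRefl {n : ℕ} (u : Esp n) (hu : ‖u‖ = 1) : Sph n ≃ᵢ Sph n where
  toFun x := ⟨reflMap u x, by simp [norm_reflMap hu]⟩
  invFun x := ⟨reflMap u x, by simp [norm_reflMap hu]⟩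
  left_inv x := Subtype.ext (reflMap_reflMap hu x)
  right_inv x := Subtype.ext (reflMap_reflMap hu x)
  isometry_toFun := Isometry.of_dist_eq fun x y => by
    simp only [Subtype.dist_eq, dist_eq_norm, reflMap_sub, norm_reflMap hu]

lemma coe_sphRefl {n : ℕ} {u : Esp n} (hu : ‖u‖ = 1) (x : Sph n) :
    (sphRefl u hu x : Esp n) = reflMap u x := rfl

lemma sphRefl_sphRefl {n : ℕ} {u : Esp n} (hu : ‖u‖ = 1) (x : Sph n) :
    sphRefl u hu (sphRefl u hu x) = x := Subtype.ext (reflMap_reflMap hu x)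

lemma inner_sphRefl {n : ℕ} {u : Esp n} (hu : ‖u‖ = 1) (x : Sph n) :
    inner ℝ (sphRefl u hu x : Esp n) u = -inner ℝ (x : Esp n) u := inner_reflMap_self hu x

lemma sphRefl_of_inner_eq_zero {n : ℕ} {u : Esp n} (hu : ‖u‖ = 1) {x : Sph n}
    (hx : inner ℝ (x : Esp n) u = 0) : sphRefl u hu x = x :=
  Subtype.ext (by simp [coe_sphRefl, reflMap, hx])

lemma mem_twoPointSym {n : ℕ} {u : Esp n} (hu : ‖u‖ = 1) {X : Set (Sph n)} {x : Sph n} :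
    x ∈ twoPointSym u X ↔
      (0 ≤ inner ℝ (x : Esp n) u ∧ (x ∈ X ∨ sphRefl u hu x ∈ X)) ∨
      (inner ℝ (x : Esp n) u ≤ 0 ∧ x ∈ X ∧ sphRefl u hu x ∈ X) := by
  have h : reflMap u (x : Esp n) ∈ ((↑) '' X : Set (Esp n)) ↔ sphRefl u hu x ∈ X := by
    rw [← coe_sphRefl hu, Subtype.val_injective.mem_set_image]
  simp only [twoPointSym, Set.mem_ofPred_eq, h]

lemma gd_sphRefl {n : ℕ} {u : Esp n} (hu : ‖u‖ = 1) (x y : Sph n) :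
    gd (sphRefl u hu x) (sphRefl u hu y) = gd x y := by
  simp only [gd, coe_sphRefl, inner_reflMap_reflMap hu]

lemma gd_comm' {n : ℕ} (x y : Sph n) : gd x y = gd y x := by
  rw [gd, gd, real_inner_comm]

/-- Reflecting one of two points of the same half-sphere does not bring them closer. -/
lemma gd_le_gd_sphRefl {n : ℕ} {u : Esp n} (hu : ‖u‖ = 1) {x y : Sph n}
    (hx : 0 ≤ inner ℝ (x : Esp n) u) (hy : 0 ≤ inner ℝ (y : Esp n) u) :
    gd x y ≤ gd x (sphRefl u hu y) := by
  refine Real.arccos_le_arccos ?_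
  rw [coe_sphRefl, inner_reflMap_right]
  nlinarith [mul_nonneg hx hy]

lemma exists_gd_le {n : ℕ} {u : Esp n} (hu : ‖u‖ = 1) {X : Set (Sph n)} {x y : Sph n}
    (hx : x ∈ twoPointSym u X) (hy : y ∈ twoPointSym u X) :
    ∃ a ∈ X, ∃ b ∈ X, gd x y ≤ gd a b := by
  rw [mem_twoPointSym hu] at hx hy
  have hrefl := gd_sphRefl hu x y
  rcases hx with ⟨hx0, hx⟩ | ⟨-, hx, hsx⟩
  · rcases hy with ⟨hy0, hy⟩ | ⟨-, hy, hsy⟩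
    · rcases hx with hx | hx <;> rcases hy with hy | hy
      · exact ⟨x, hx, y, hy, le_rfl⟩
      · exact ⟨x, hx, _, hy, gd_le_gd_sphRefl hu hx0 hy0⟩
      · refine ⟨y, hy, _, hx, ?_⟩
        rw [gd_comm' x y]
        exact gd_le_gd_sphRefl hu hy0 hx0
      · exact ⟨_, hx, _, hy, hrefl.ge⟩
    · rcases hx with hx | hx
      · exact ⟨x, hx, y, hy, le_rfl⟩
      · exact ⟨_, hx, _, hsy, hrefl.ge⟩
  · have hy' : y ∈ X ∨ sphRefl u hu y ∈ X := hy.elim (fun h => h.2) (fun h => Or.inl h.2.1)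
    rcases hy' with hy | hy
    · exact ⟨x, hx, y, hy, le_rfl⟩
    · exact ⟨_, hsx, _, hy, hrefl.ge⟩

lemma sphDiam_twoPointSym_le {n : ℕ} {u : Esp n} (hu : ‖u‖ = 1) (X : Set (Sph n)) :
    sphDiam (twoPointSym u X) ≤ sphDiam X := by
  refine Real.sSup_le ?_ (Real.sSup_nonneg ?_)
  · rintro r ⟨x, hx, y, hy, rfl⟩
    obtain ⟨a, ha, b, hb, hab⟩ := exists_gd_le hu hx hy
    refine hab.trans (le_csSup ⟨Real.pi, ?_⟩ ⟨a, ha, b, hb, rfl⟩)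
    rintro r ⟨x, -, y, -, rfl⟩
    exact Real.arccos_le_pi _
  · rintro r ⟨x, -, y, -, rfl⟩
    exact Real.arccos_nonneg _

lemma continuous_inner_coe {n : ℕ} (u : Esp n) :
    Continuous fun x : Sph n => inner ℝ (x : Esp n) u := by
  fun_prop

lemma isClosed_twoPointSym {n : ℕ} {u : Esp n} (hu : ‖u‖ = 1) {X : Set (Sph n)}
    (hX : IsClosed X) : IsClosed (twoPointSym u X) := by
  have hs : IsClosed (sphRefl u hu ⁻¹' X) := hX.preimage (sphRefl u hu).continuous
  have hc := continuous_inner_coe u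
  have h : twoPointSym u X =
      ({x : Sph n | 0 ≤ inner ℝ (x : Esp n) u} ∩ (X ∪ sphRefl u hu ⁻¹' X)) ∪
      ({x : Sph n | inner ℝ (x : Esp n) u ≤ 0} ∩ (X ∩ sphRefl u hu ⁻¹' X)) := by
    ext x
    exact mem_twoPointSym hu
  rw [h]
  exact ((isClosed_le continuous_const hc).inter (hX.union hs)).union
    ((isClosed_le hc continuous_const).inter (hX.inter hs))

lemma sphVol_preimage {n : ℕ} {u : Esp n} (hu : ‖u‖ = 1) (A : Set (Sph n)) :
    sphVol n (sphRefl u hu ⁻¹' A) = sphVol n A :=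
  (sphRefl u hu).hausdorffMeasure_preimage _ _

lemma sphVol_twoPointSym {n : ℕ} {u : Esp n} (hu : ‖u‖ = 1) {X : Set (Sph n)}
    (hX : IsClosed X) : sphVol n (twoPointSym u X) = sphVol n X := by
  set s := sphRefl u hu with hs
  set P : Set (Sph n) := {x | 0 < inner ℝ (x : Esp n) u} with hP
  set N : Set (Sph n) := {x | inner ℝ (x : Esp n) u < 0} with hN
  have hc := continuous_inner_coe u
  have hPm : MeasurableSet P := (isOpen_lt continuous_const hc).measurableSet
  have hNm : MeasurableSet N := (isOpen_lt hc continuous_const).measurableSet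
  have hsX : MeasurableSet (s ⁻¹' X) := (hX.preimage s.continuous).measurableSet
  have split (A : Set (Sph n)) :
      sphVol n A = sphVol n (A ∩ P) + (sphVol n (A ∩ N) + sphVol n ((A \ P) \ N)) := by
    rw [← measure_inter_add_sdiff A hPm, ← measure_inter_add_sdiff (A \ P) hNm]
    congr 3
    ext x
    simp only [hP, hN, Set.mem_inter_iff, Set.mem_sdiff, Set.mem_ofPred_eq, not_lt]
    exact ⟨fun h => ⟨h.1.1, h.2⟩, fun h => ⟨⟨h.1, h.2.le⟩, h.2⟩⟩
  have hYP : twoPointSym u X ∩ P = (X ∩ P) ∪ (s ⁻¹' X ∩ P) := by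
    ext x
    simp only [Set.mem_inter_iff, Set.mem_union, Set.mem_preimage, mem_twoPointSym hu, hP,
      Set.mem_ofPred_eq, ← hs]
    constructor
    · rintro ⟨⟨-, h⟩ | ⟨h0, -⟩, hx⟩
      · tauto
      · exact absurd hx h0.not_gt
    · rintro (⟨h, hx⟩ | ⟨h, hx⟩)
      · exact ⟨Or.inl ⟨hx.le, Or.inl h⟩, hx⟩
      · exact ⟨Or.inl ⟨hx.le, Or.inr h⟩, hx⟩
  have hYN : twoPointSym u X ∩ N = s ⁻¹' ((X ∩ P) ∩ (s ⁻¹' X ∩ P)) := by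
    ext x
    simp only [Set.mem_inter_iff, Set.mem_preimage, mem_twoPointSym hu, hP, hN,
      Set.mem_ofPred_eq, hs, inner_sphRefl, sphRefl_sphRefl, Left.neg_pos_iff]
    constructor
    · rintro ⟨⟨h0, -⟩ | ⟨-, h⟩, hx⟩
      · exact absurd hx h0.not_gt
      · tauto
    · rintro ⟨⟨h, hx⟩, h', -⟩
      exact ⟨Or.inr ⟨hx.le, h', h⟩, hx⟩
  have hYE : (twoPointSym u X \ P) \ N = (X \ P) \ N := by
    ext x
    simp only [Set.mem_sdiff, hP, hN, Set.mem_ofPred_eq, not_lt, and_assoc]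
    refine and_congr_left fun ⟨h1, h2⟩ => ?_
    have h0 := le_antisymm h1 h2
    rw [mem_twoPointSym hu, sphRefl_of_inner_eq_zero hu h0]
    tauto
  have hXN : s ⁻¹' X ∩ P = s ⁻¹' (X ∩ N) := by
    ext x
    simp [hP, hN, hs, inner_sphRefl]
  rw [split (twoPointSym u X), split X, hYP, hYN, hYE, sphVol_preimage, ← add_assoc,
    measure_union_add_inter _ (hsX.inter hPm), hXN, sphVol_preimage, add_assoc]

/-- two-point symmetrization preserves compactness and volume, and
does not increase the geodesic diameter. -/
theorem twoPointSym_properties (n : ℕ) (hn : 2 ≤ n) (u : Esp n) (hu : ‖u‖ = 1)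
    (X : Set (Sph n)) (hne : X.Nonempty) (hcomp : IsCompact X)
    (hdiam : sphDiam X < Real.pi) :
    IsCompact (twoPointSym u X) ∧
      sphVol n (twoPointSym u X) = sphVol n X ∧
      sphDiam (twoPointSym u X) ≤ sphDiam X := by
  have hX := hcomp.isClosed
  exact ⟨(isClosed_twoPointSym hu hX).isCompact, sphVol_twoPointSym hu hX,
    sphDiam_twoPointSym_le hu X⟩
end
end

section
/- Let n ≥ 2 and let K ⊆ H^n be a compact convex set whose interior in H^n is nonempty. Suppose that for every v ∈ ℝ^{n+1} with 𝓑(v,v) < 0 the two-point symmetrization τ_v(K) is convex. Then K is a closed hyperbolic ball: there exist z ∈ H^n and r > 0 with K = B(z,r). -/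
/-!
Call a boundary point `a` of `K` smooth if the cone over `K` has exactly one supporting hyperplane
at `a`, with `𝓑`-unit normal `n_a`. For two smooth points `a ≠ b` let `σ` be the reflection
exchanging them. Near `a`, the two-point symmetrization for `σ` (with `a` on the positive side) is
`K ∪ σ(K)`, a union of two sets which to first order are the half-spaces with normals `n_a` and
`σ(n_b)`; since it is convex, `σ(n_b) = n_a` (`SmoothPt.normal_eq`). Opposite normals are excluded
because then `K` would lie in a hyperplane.

Hence `n_b - n_a` is a multiple of `b - a` for all smooth `a`, `b`. Three distinct points of the
hyperboloid are affinely independent, so the factor is a constant `c` and `n_a = c a + w` with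
`w` fixed (`exists_normal_affine`). From `𝓑(a, n_a) = 0` every smooth point satisfies
`𝓑(a, z) = 1` with `z = -w / c`. The boundary point nearest to an interior point is smooth, as a
ball touches it from inside, so smooth points are dense in the boundary
(`hbd_subset_of_isClosed`), and the whole boundary lies in `{𝓑(·, z) = 1}` (`exists_center`).
The reversed Cauchy–Schwarz inequality then gives `K = {𝓑(·, z) ≤ 1}` (`eq_halfspace`), and
compactness forces `z` to be timelike (`timelike_of_bounded`); normalizing `z` gives the center.
-/

noncomputable section

/-- The ambient space `ℝ^{n+1} = ℝ × ℝ^n` of the hyperboloid model. -/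
abbrev Amb (n : ℕ) : Type := ℝ × EuclideanSpace ℝ (Fin n)

/-- The Lorentzian bilinear form `𝓑((s,x),(t,y)) = s·t − ⟨x,y⟩`. -/
def Bform {n : ℕ} (p q : Amb n) : ℝ := p.1 * q.1 - inner (𝕜 := ℝ) p.2 q.2

/-- The hyperboloid model `H^n = {(t,x) : t ≥ 1, t² − ‖x‖² = 1}` as a subtype. -/
abbrev Hyp (n : ℕ) : Type := {p : Amb n // 1 ≤ p.1 ∧ p.1 ^ 2 - ‖p.2‖ ^ 2 = 1}

/-- Closed hyperbolic ball `B(z,r) = {x ∈ H^n : 𝓑(x,z) ≤ cosh r}`. -/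
def hBall {n : ℕ} (z : Hyp n) (r : ℝ) : Set (Hyp n) :=
  {x | Bform (x : Amb n) (z : Amb n) ≤ Real.cosh r}

/-- `K ⊆ H^n` is convex if the cone `{t • x : t ≥ 0, x ∈ K}` is convex in `ℝ^{n+1}`. -/
def HConvex {n : ℕ} (K : Set (Hyp n)) : Prop :=
  Convex ℝ {p : Amb n | ∃ t : ℝ, 0 ≤ t ∧ ∃ x ∈ K, p = t • (x : Amb n)}

/-- Reflection of `ℝ^{n+1}` through the Lorentz-orthogonal complement of `v`:
`σ_v(p) = p − (2𝓑(p,v)/𝓑(v,v)) • v`. -/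
def hRefl {n : ℕ} (v : Amb n) (p : Amb n) : Amb n :=
  p - (2 * Bform p v / Bform v v) • v

/-- Two-point symmetrization of `K ⊆ H^n` with respect to `v` (with `𝓑(v,v) < 0`):
`τ_v(K) = ((K ∪ σ_v(K)) ∩ H_v⁺) ∪ ((K ∩ σ_v(K)) ∩ H_v⁻)` where
`H_v⁺ = {𝓑(x,v) ≥ 0}` and `H_v⁻ = {𝓑(x,v) ≤ 0}`. -/
def hTwoPointSym {n : ℕ} (v : Amb n) (K : Set (Hyp n)) : Set (Hyp n) :=
  {x | (0 ≤ Bform (x : Amb n) v ∧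
          (x ∈ K ∨ hRefl v (x : Amb n) ∈ (((↑) '' K : Set (Amb n))))) ∨
       (Bform (x : Amb n) v ≤ 0 ∧
          (x ∈ K ∧ hRefl v (x : Amb n) ∈ (((↑) '' K : Set (Amb n)))))}


open Filter Topology
open scoped Pointwise

section

variable {n : ℕ}

/-! ### The Lorentzian form -/

theorem Bform_add_left (x y z : Amb n) : Bform (x + y) z = Bform x z + Bform y z := by
  simp only [Bform, Prod.fst_add, Prod.snd_add, inner_add_left]; ring

theorem Bform_smul_left (t : ℝ) (x z : Amb n) : Bform (t • x) z = t * Bform x z := by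
  simp only [Bform, Prod.smul_fst, Prod.smul_snd, inner_smul_left, smul_eq_mul]
  simp; ring

theorem Bform_comm (x y : Amb n) : Bform x y = Bform y x := by
  simp only [Bform, real_inner_comm]; ring

theorem Bform_add_right (x y z : Amb n) : Bform z (x + y) = Bform z x + Bform z y := by
  rw [Bform_comm, Bform_add_left, Bform_comm x, Bform_comm y]

theorem Bform_smul_right (t : ℝ) (x z : Amb n) : Bform z (t • x) = t * Bform z x := by
  rw [Bform_comm, Bform_smul_left, Bform_comm x]

theorem Bform_neg_left (x z : Amb n) : Bform (-x) z = -Bform x z := by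
  rw [← neg_one_smul ℝ x, Bform_smul_left]; ring

theorem Bform_neg_right (x z : Amb n) : Bform z (-x) = -Bform z x := by
  rw [← neg_one_smul ℝ x, Bform_smul_right]; ring

theorem Bform_sub_left (x y z : Amb n) : Bform (x - y) z = Bform x z - Bform y z := by
  rw [sub_eq_add_neg, Bform_add_left, Bform_neg_left]; ring

theorem Bform_sub_right (x y z : Amb n) : Bform z (x - y) = Bform z x - Bform z y := by
  rw [sub_eq_add_neg, Bform_add_right, Bform_neg_right]; ring

theorem Bform_continuous : Continuous fun p : Amb n × Amb n => Bform p.1 p.2 := by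
  unfold Bform; fun_prop

@[fun_prop]
theorem Bform_comp_continuous {X : Type*} [TopologicalSpace X] {f g : X → Amb n}
    (hf : Continuous f) (hg : Continuous g) : Continuous fun x => Bform (f x) (g x) :=
  Bform_continuous.comp (hf.prodMk hg)

theorem eventually_pos {X : Type*} [TopologicalSpace X] {f : X → ℝ} (hf : Continuous f) {x : X}
    (hx : 0 < f x) : ∀ᶠ y in 𝓝 x, 0 < f y :=
  (hf.tendsto x).eventually_const_lt hx

theorem Bform_self_eq (x : Amb n) : Bform x x = x.1 ^ 2 - ‖x.2‖ ^ 2 := by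
  simp only [Bform, real_inner_self_eq_norm_sq]; ring

theorem Hyp.Bform_self (x : Hyp n) : Bform (x : Amb n) x = 1 := by
  rw [Bform_self_eq]; exact x.2.2

/-- Reversed Cauchy–Schwarz inequality on the hyperboloid. -/
theorem Hyp.one_le_Bform (x y : Hyp n) : 1 ≤ Bform (x : Amb n) y := by
  obtain ⟨⟨a, x⟩, ha, hx⟩ := x
  obtain ⟨⟨b, y⟩, hb, hy⟩ := y
  simp only [Bform] at *
  have h := real_inner_le_norm x y
  have h2 : 1 + ‖x‖ * ‖y‖ ≤ a * b := by
    apply le_of_sq_le_sq _ (by positivity)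
    nlinarith [sq_nonneg (‖x‖ - ‖y‖)]
  linarith

theorem Hyp.eq_of_Bform_le (x y : Hyp n) (h : Bform (x : Amb n) y ≤ 1) : x = y := by
  obtain ⟨⟨a, x⟩, ha, hx⟩ := x
  obtain ⟨⟨b, y⟩, hb, hy⟩ := y
  simp only [Bform] at *
  have h1 := real_inner_le_norm x y
  have h2 : a * b ≤ 1 + ‖x‖ * ‖y‖ := by linarith
  have h3 : (a * b) ^ 2 ≤ (1 + ‖x‖ * ‖y‖) ^ 2 := by gcongr
  have h4 : (‖x‖ - ‖y‖) ^ 2 ≤ 0 := by nlinarith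
  have h5 : ‖x‖ = ‖y‖ := by
    linarith [pow_eq_zero_iff (two_ne_zero) |>.1 (le_antisymm h4 (sq_nonneg _))]
  have h6 : a = b := by
    have : a ^ 2 = b ^ 2 := by rw [h5] at hx; linarith
    exact (sq_eq_sq₀ (by linarith) (by linarith)).1 this
  have h7 : ‖x - y‖ ^ 2 ≤ 0 := by
    rw [norm_sub_sq_real]; subst h6; nlinarith
  have h8 : x = y := by
    rw [← sub_eq_zero, ← norm_eq_zero]
    exact pow_eq_zero_iff (two_ne_zero) |>.1 (le_antisymm h7 (sq_nonneg _))
  subst h6 h8; rfl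

theorem Hyp.one_lt_Bform {x y : Hyp n} (h : x ≠ y) : 1 < Bform (x : Amb n) y := by
  by_contra h'; exact h (Hyp.eq_of_Bform_le x y (not_lt.1 h'))

/-- The form is negative definite on the tangent space of the hyperboloid. -/
theorem eq_zero_of_perp (a : Hyp n) (N : Amb n) (h : Bform (a : Amb n) N = 0)
    (hN : 0 ≤ Bform N N) : N = 0 := by
  rw [Bform_self_eq] at hN
  obtain ⟨⟨a, x⟩, ha, hx⟩ := a
  obtain ⟨b, y⟩ := N
  simp only [Bform] at *
  have h1 := abs_real_inner_le_norm x y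
  have h2 : (a * b) ^ 2 ≤ (‖x‖ * ‖y‖) ^ 2 := by
    rw [show a * b = inner ℝ x y by linarith, ← sq_abs]; gcongr
  have h3 : ‖y‖ ^ 2 ≤ 0 := by nlinarith [sq_nonneg a]
  have h4 : ‖y‖ = 0 := pow_eq_zero_iff (two_ne_zero) |>.1 (le_antisymm h3 (sq_nonneg _))
  have h5 : y = 0 := norm_eq_zero.1 h4
  have h6 : b = 0 := by
    rw [h4] at h2
    have : a * b = 0 := pow_eq_zero_iff (two_ne_zero) |>.1
      (le_antisymm (by simpa using h2) (sq_nonneg _))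
    rcases mul_eq_zero.1 this with h | h <;> linarith
  subst h5 h6; rfl

/-- Radial projection of the open future cone to the hyperboloid. -/
theorem exists_normalize (y : Amb n) (h1 : 0 < y.1) (h2 : 0 < Bform y y) :
    ∃ k : Hyp n, y = √(Bform y y) • (k : Amb n) := by
  have ht : 0 < √(Bform y y) := Real.sqrt_pos.2 h2
  have hs : √(Bform y y) ^ 2 = Bform y y := Real.sq_sqrt h2.le
  set t := √(Bform y y)
  have h3 : (t⁻¹ • y).1 ^ 2 - ‖(t⁻¹ • y).2‖ ^ 2 = 1 := by
    rw [← Bform_self_eq, Bform_smul_left, Bform_smul_right, ← hs]; field_simp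
  have h4 : 0 < (t⁻¹ • y).1 := by
    simp only [Prod.smul_fst, smul_eq_mul]; positivity
  refine ⟨⟨t⁻¹ • y, ?_, h3⟩, ?_⟩
  · nlinarith [sq_nonneg ‖(t⁻¹ • y).2‖]
  · simp [smul_smul, ht.ne']

/-! ### Reflections -/

theorem hRefl_symm (v x y : Amb n) : Bform (hRefl v x) y = Bform x (hRefl v y) := by
  simp only [hRefl, Bform_sub_left, Bform_sub_right, Bform_smul_left, Bform_smul_right,
    Bform_comm v y]; ring

theorem hRefl_hRefl {v : Amb n} (hv : Bform v v ≠ 0) (x : Amb n) : hRefl v (hRefl v x) = x := by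
  simp only [hRefl, Bform_sub_left, Bform_smul_left]
  rw [sub_sub, ← add_smul]
  have : 2 * Bform x v / Bform v v +
    2 * (Bform x v - 2 * Bform x v / Bform v v * Bform v v) / Bform v v = 0 := by
    field_simp; ring
  rw [this, zero_smul, sub_zero]

theorem hRefl_smul (v x : Amb n) (t : ℝ) : hRefl v (t • x) = t • hRefl v x := by
  simp only [hRefl, Bform_smul_left, smul_sub, smul_smul]; congr 2; ring

theorem hRefl_add (v x y : Amb n) : hRefl v (x + y) = hRefl v x + hRefl v y := by
  simp only [hRefl, Bform_add_left]
  rw [show 2 * (Bform x v + Bform y v) / Bform v v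
    = 2 * Bform x v / Bform v v + 2 * Bform y v / Bform v v by ring, add_smul]
  abel

/-- Reflections preserve the upper sheet. -/
theorem exists_hRefl_eq {v : Amb n} (hv : Bform v v < 0) (k : Hyp n) :
    ∃ l : Hyp n, (l : Amb n) = hRefl v k := by
  have h1 : Bform (hRefl v (k : Amb n)) (hRefl v k) = 1 := by
    rw [hRefl_symm, hRefl_hRefl hv.ne, k.Bform_self]
  have h2 : 0 < Bform (hRefl v (k : Amb n)) k := by
    simp only [hRefl, Bform_sub_left, Bform_smul_left, k.Bform_self, Bform_comm v (k : Amb n)]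
    have : 2 * Bform (k : Amb n) v / Bform v v * Bform (k : Amb n) v ≤ 0 := by
      rw [show 2 * Bform (k : Amb n) v / Bform v v * Bform (k : Amb n) v
        = 2 * Bform (k : Amb n) v ^ 2 / Bform v v by ring]
      exact div_nonpos_of_nonneg_of_nonpos (by positivity) hv.le
    linarith
  have h3 : 0 < (hRefl v (k : Amb n)).1 := by
    by_contra h
    rw [not_lt] at h
    obtain ⟨k, hk, hk'⟩ := k
    rw [Bform_self_eq] at h1
    simp only [Bform] at *
    have h5 := neg_le_of_abs_le (abs_real_inner_le_norm (hRefl v k).2 k.2)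
    have h6 : ‖(hRefl v k).2‖ ≤ -(hRefl v k).1 :=
      abs_le_of_sq_le_sq' (by nlinarith) (by linarith) |>.2
    have h7 : ‖k.2‖ ≤ k.1 := abs_le_of_sq_le_sq' (by nlinarith) (by linarith) |>.2
    nlinarith [mul_le_mul h6 h7 (norm_nonneg _) (by linarith)]
  refine ⟨⟨hRefl v k, ?_, ?_⟩, rfl⟩
  · rw [Bform_self_eq] at h1
    nlinarith [sq_nonneg ‖(hRefl v (k : Amb n)).2‖]
  · rw [← Bform_self_eq, h1]

theorem Bform_diff (a b : Hyp n) :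
    Bform (b.1 - a.1) (b.1 - a.1) = 2 - 2 * Bform (a : Amb n) b := by
  simp only [Bform_sub_left, Bform_sub_right, Hyp.Bform_self, Bform_comm (b : Amb n) a]; ring

theorem hRefl_diff {a b : Hyp n} (h : a ≠ b) : hRefl (b.1 - a.1) a = b := by
  have := Hyp.one_lt_Bform h
  rw [hRefl, Bform_diff, Bform_sub_right, a.Bform_self,
    show 2 * (Bform (a : Amb n) b - 1) / (2 - 2 * Bform (a : Amb n) b) = -1 by
      rw [div_eq_iff (by linarith)]; ring]
  simp

/-! ### The cone over a subset of the hyperboloid -/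

/-- The cone over `K`; `HConvex K` says that this set is convex. -/
def hcone (K : Set (Hyp n)) : Set (Amb n) := {p | ∃ t : ℝ, 0 ≤ t ∧ ∃ x ∈ K, p = t • (x : Amb n)}

theorem Hyp.eq_of_smul {x y : Hyp n} {s : ℝ} (hs : 0 ≤ s) (h : (x : Amb n) = s • (y : Amb n)) :
    x = y := by
  have h1 := x.Bform_self
  rw [h, Bform_smul_left, Bform_smul_right, y.Bform_self] at h1
  have h2 : s = 1 := by nlinarith
  apply Subtype.ext; rw [h, h2, one_smul]

theorem mem_hcone_iff {K : Set (Hyp n)} {x : Hyp n} : (x : Amb n) ∈ hcone K ↔ x ∈ K := by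
  constructor
  · rintro ⟨t, ht, y, hy, h⟩
    rwa [Hyp.eq_of_smul ht h]
  · intro h
    exact ⟨1, zero_le_one, x, h, (one_smul _ _).symm⟩

theorem smul_mem_hcone {K : Set (Hyp n)} {x : Amb n} (hx : x ∈ hcone K) {t : ℝ} (ht : 0 ≤ t) :
    t • x ∈ hcone K := by
  obtain ⟨s, hs, y, hy, rfl⟩ := hx
  exact ⟨t * s, by positivity, y, hy, by rw [smul_smul]⟩

theorem mem_hcone_twoPointSym {K : Set (Hyp n)} {v : Amb n} (hv : Bform v v < 0) {x : Amb n}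
    (hx : 0 < Bform x v) :
    x ∈ hcone (hTwoPointSym v K) ↔ (x ∈ hcone K ∨ hRefl v x ∈ hcone K) := by
  constructor
  · rintro ⟨t, ht, y, hy, rfl⟩
    rw [Bform_smul_left] at hx
    have hy' : 0 < Bform (y : Amb n) v := pos_of_mul_pos_right hx ht
    rcases hy with ⟨-, h | ⟨k, hk, h⟩⟩ | ⟨h, -⟩
    · exact Or.inl ⟨t, ht, y, h, rfl⟩
    · right
      exact ⟨t, ht, k, hk, by rw [hRefl_smul, h]⟩
    · linarith
  · rintro (⟨t, ht, y, hy, rfl⟩ | ⟨t, ht, y, hy, h⟩)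
    · rw [Bform_smul_left] at hx
      exact ⟨t, ht, y, Or.inl ⟨(pos_of_mul_pos_right hx ht).le, Or.inl hy⟩, rfl⟩
    · obtain ⟨l, hl⟩ := exists_hRefl_eq hv y
      have h2 : x = t • (l : Amb n) := by
        rw [hl, ← hRefl_smul, ← h, hRefl_hRefl hv.ne]
      subst h2
      rw [Bform_smul_left] at hx
      refine ⟨t, ht, l, Or.inl ⟨(pos_of_mul_pos_right hx ht).le, Or.inr ⟨y, hy, ?_⟩⟩, rfl⟩
      rw [hl, hRefl_hRefl hv.ne]

/-! ### Smooth boundary points -/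

/-- `a ∈ K` is a smooth boundary point with unit normal `N`: the half-space `{𝓑(·,N) ≥ 0}`
contains the cone over `K`, and every direction pointing strictly into that half-space enters the
cone. -/
structure SmoothPt (K : Set (Hyp n)) (a : Hyp n) (N : Amb n) : Prop where
  mem : a ∈ K
  perp : Bform (a : Amb n) N = 0
  unit : Bform N N = -1
  supp : ∀ x ∈ hcone K, 0 ≤ Bform x N
  dir : ∀ w, 0 < Bform w N → ∀ᶠ ε in 𝓝[>] (0 : ℝ), (a : Amb n) + ε • w ∈ hcone K

/-- The reflection exchanging two smooth boundary points exchanges their normals. Otherwise,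
with `N` and `N'` the normals of `K` and of its mirror image at `a`, the direction `N + N'` leaves
both sets, but it is an average of one direction entering `K` and one entering the mirror
image, so the two-point symmetrization is not convex. -/
theorem SmoothPt.normal_eq {K : Set (Hyp n)}
    (hsym : ∀ v : Amb n, Bform v v < 0 → HConvex (hTwoPointSym v K))
    {a b : Hyp n} {N M : Amb n} (ha : SmoothPt K a N) (hb : SmoothPt K b M) (hab : a ≠ b) :
    M = hRefl (b.1 - a.1) N := by
  have h1 := Hyp.one_lt_Bform hab
  have hv : Bform (b.1 - a.1) (b.1 - a.1) < 0 := by rw [Bform_diff]; linarith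
  have hav : 0 < Bform (a : Amb n) (b.1 - a.1) := by
    rw [Bform_sub_right, a.Bform_self]; linarith
  have hσa := hRefl_diff hab
  have hNv : Bform N (b.1 - a.1) = Bform (b : Amb n) N := by
    rw [Bform_comm, Bform_sub_left, ha.perp, sub_zero]
  have hC : Convex ℝ (hcone (hTwoPointSym (b.1 - a.1) K)) := hsym _ hv
  set v : Amb n := b.1 - a.1 with hvdef
  set N' := hRefl v M with hN'
  have hM : M = hRefl v N' := (hRefl_hRefl hv.ne M).symm
  have haN' : Bform (a : Amb n) N' = 0 := by rw [hN', ← hRefl_symm, hσa, hb.perp]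
  have hN'N' : Bform N' N' = -1 := by rw [hN', ← hRefl_symm, hRefl_hRefl hv.ne, hb.unit]
  have hne : N' ≠ -N := by
    intro h
    have h2 : M = -hRefl v N := by
      rw [hM, h, ← neg_one_smul ℝ N, hRefl_smul, neg_one_smul]
    have h3 : 0 ≤ Bform (b : Amb n) N := ha.supp _ (mem_hcone_iff.2 hb.mem)
    have h4 : 0 ≤ Bform (a : Amb n) M := hb.supp _ (mem_hcone_iff.2 ha.mem)
    have h5 : Bform (a : Amb n) M = - Bform (b : Amb n) N := by
      rw [h2, Bform_neg_right, ← hRefl_symm, hσa]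
    have h6 : hRefl v N = N := by
      rw [hRefl, hNv, show Bform (b : Amb n) N = 0 by linarith]; simp
    rw [h6] at h2
    have h7 := ha.dir (-N) (by rw [Bform_neg_left, ha.unit]; norm_num)
    obtain ⟨ε, h8, h9⟩ := (h7.and self_mem_nhdsWithin).exists
    have h9 : 0 < ε := h9
    have h10 := hb.supp _ h8
    rw [h2, Bform_neg_right, Bform_add_left, Bform_smul_left, Bform_neg_left, ha.perp, ha.unit]
      at h10
    linarith
  suffices h : N' = N by rw [hM, h]
  by_contra hne2
  have hβ1 : -1 < Bform N N' := by
    by_contra h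
    refine hne2 (sub_eq_zero.1 (eq_zero_of_perp a (N' - N) ?_ ?_))
    · rw [Bform_sub_right, ha.perp, haN', sub_zero]
    · simp only [Bform_sub_left, Bform_sub_right, hN'N', ha.unit, Bform_comm N' N]; linarith
  have hβ2 : Bform N N' < 1 := by
    by_contra h
    refine hne (add_eq_zero_iff_eq_neg.1 (eq_zero_of_perp a (N' + N) ?_ ?_))
    · rw [Bform_add_right, ha.perp, haN', add_zero]
    · simp only [Bform_add_left, Bform_add_right, hN'N', ha.unit, Bform_comm N' N]; linarith
  have hβc := Bform_comm N' N
  set β := Bform N N' with hβ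
  set δ := (1 + β) / 2 with hδ
  have hδ0 : 0 < δ := by rw [hδ]; linarith
  set w₁ := (N - N') + δ • (N + N') with hw₁
  set w₂ := (N' - N) + δ • (N + N') with hw₂
  have e1 : ∀ᶠ ε in 𝓝[>] (0 : ℝ), (b : Amb n) + ε • hRefl v w₁ ∈ hcone K := by
    apply hb.dir
    rw [hRefl_symm, ← hN', hw₁]
    simp only [Bform_add_left, Bform_sub_left, Bform_smul_left, hN'N', ← hβ]
    rw [hδ]; nlinarith
  have e2 : ∀ᶠ ε in 𝓝[>] (0 : ℝ), (a : Amb n) + ε • w₂ ∈ hcone K := by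
    apply ha.dir
    rw [hw₂]
    simp only [Bform_add_left, Bform_sub_left, Bform_smul_left, ha.unit, hβc]
    rw [hδ]; nlinarith
  have ev : ∀ w : Amb n, ∀ᶠ ε in 𝓝[>] (0 : ℝ), 0 < Bform ((a : Amb n) + ε • w) v := by
    intro w
    apply eventually_nhdsWithin_of_eventually_nhds
    have : ContinuousAt (fun ε : ℝ => Bform ((a : Amb n) + ε • w) v) 0 := by
      apply Continuous.continuousAt; fun_prop
    exact this.eventually_const_lt (by simpa using hav)
  obtain ⟨ε, ⟨⟨⟨⟨h1, h2⟩, h3⟩, h4⟩, h5⟩, hε⟩ :=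
    (((((e1.and e2).and (ev w₁)).and (ev w₂)).and (ev (δ • (N + N')))).and
      self_mem_nhdsWithin).exists
  have hε : 0 < ε := hε
  have m1 : (a : Amb n) + ε • w₁ ∈ hcone (hTwoPointSym v K) := by
    rw [mem_hcone_twoPointSym hv h3]; right
    rwa [hRefl_add, hRefl_smul, hσa]
  have m2 : (a : Amb n) + ε • w₂ ∈ hcone (hTwoPointSym v K) := by
    rw [mem_hcone_twoPointSym hv h4]; left; exact h2
  have m3 : (a : Amb n) + ε • (δ • (N + N')) ∈ hcone (hTwoPointSym v K) := by
    have := hC m1 m2 (show (0 : ℝ) ≤ 1 / 2 by norm_num) (show (0 : ℝ) ≤ 1 / 2 by norm_num)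
      (by norm_num)
    convert this using 1
    rw [hw₁, hw₂]; module
  rw [mem_hcone_twoPointSym hv h5] at m3
  have hprod : 0 < ε * δ := by positivity
  rcases m3 with h | h
  · have := ha.supp _ h
    simp only [Bform_add_left, Bform_smul_left, ha.perp, ha.unit, hβc] at this
    nlinarith
  · have := hb.supp _ h
    rw [hRefl_symm, ← hN'] at this
    simp only [Bform_add_left, Bform_smul_left, haN', hN'N', ← hβ] at this
    nlinarith

/-! ### Topology of the cone -/

theorem hcone_fst_nonneg {K : Set (Hyp n)} {x : Amb n} (hx : x ∈ hcone K) : 0 ≤ x.1 := by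
  obtain ⟨t, ht, y, -, rfl⟩ := hx
  simp only [Prod.smul_fst, smul_eq_mul]
  exact mul_nonneg ht (by linarith [y.2.1])

theorem hcone_isClosed {K : Set (Hyp n)} (hK : IsCompact K) : IsClosed (hcone K) := by
  have key : ∀ M : ℝ, IsCompact ((fun p : ℝ × Hyp n => p.1 • (p.2 : Amb n)) '' (Set.Icc 0 M ×ˢ K)) :=
    fun M => (isCompact_Icc.prod hK).image (by fun_prop)
  apply isClosed_of_closure_subset
  intro y hy
  have ho : IsOpen {p : Amb n | p.1 < y.1 + 1} := isOpen_lt (by fun_prop) (by fun_prop)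
  have h1 : y ∈ closure ({p : Amb n | p.1 < y.1 + 1} ∩ hcone K) :=
    ho.inter_closure ⟨by simp, hy⟩
  have h2 : {p : Amb n | p.1 < y.1 + 1} ∩ hcone K ⊆
      (fun p : ℝ × Hyp n => p.1 • (p.2 : Amb n)) '' (Set.Icc 0 (y.1 + 1) ×ˢ K) := by
    rintro p ⟨hp, t, ht, k, hk, rfl⟩
    refine ⟨(t, k), ⟨⟨ht, ?_⟩, hk⟩, rfl⟩
    simp only [Set.mem_ofPred_eq, Prod.smul_fst, smul_eq_mul] at hp
    nlinarith [k.2.1]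
  have h3 := closure_minimal h2 (key _).isClosed h1
  obtain ⟨⟨t, k⟩, ⟨⟨ht, -⟩, hk⟩, rfl⟩ := h3
  exact ⟨t, ht, k, hk, rfl⟩

theorem smul_mem_interior_hcone {K : Set (Hyp n)} {x : Amb n} (hx : x ∈ interior (hcone K))
    {t : ℝ} (ht : 0 < t) : t • x ∈ interior (hcone K) := by
  have h : t • x ∈ interior (t • hcone K) := by
    rw [interior_smul₀ ht.ne']; exact Set.smul_mem_smul_set hx
  refine interior_mono ?_ h
  rintro _ ⟨y, hy, rfl⟩
  exact smul_mem_hcone hy ht.le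

theorem interior_hcone_nonempty {K : Set (Hyp n)} (h : (interior K).Nonempty) :
    (interior (hcone K)).Nonempty := by
  obtain ⟨k, hk⟩ := h
  rw [mem_interior_iff_mem_nhds, nhds_subtype_eq_comap] at hk
  obtain ⟨U, hU, hUK⟩ := mem_comap.1 hk
  refine ⟨k, mem_interior_iff_mem_nhds.2 ?_⟩
  have hk1 : Bform (k : Amb n) k = 1 := k.Bform_self
  have hsqrt : Continuous fun y : Amb n => √(Bform y y) := by fun_prop
  have hc : ContinuousAt (fun y : Amb n => (√(Bform y y))⁻¹ • y) k :=
    (hsqrt.continuousAt.inv₀ (by rw [hk1]; simp)).smul continuousAt_id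
  have e1 : ∀ᶠ y in 𝓝 (k : Amb n), (√(Bform y y))⁻¹ • y ∈ U :=
    hc.eventually_mem (by simpa [hk1] using hU)
  have e2 : ∀ᶠ y in 𝓝 (k : Amb n), 0 < Bform y y := by
    refine eventually_pos (f := fun y => Bform y y) (by fun_prop) ?_
    rw [hk1]; exact one_pos
  have e3 : ∀ᶠ y in 𝓝 (k : Amb n), 0 < y.1 := by
    refine eventually_pos (f := fun y : Amb n => y.1) (by fun_prop) ?_
    linarith [k.2.1]
  filter_upwards [e1, e2, e3] with y h1 h2 h3
  obtain ⟨l, hl⟩ := exists_normalize y h3 h2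
  have ht : 0 < √(Bform y y) := Real.sqrt_pos.2 h2
  refine ⟨_, ht.le, l, hUK ?_, hl⟩
  have : (l : Amb n) = (√(Bform y y))⁻¹ • y := by
    rw [eq_inv_smul_iff₀ ht.ne', ← hl]
  change (l : Amb n) ∈ U
  rwa [this]

theorem exists_smul_of_fst_pos {K : Set (Hyp n)} {x : Amb n} (hx : x ∈ hcone K) (h : 0 < x.1) :
    ∃ t : ℝ, 0 < t ∧ ∃ k ∈ K, x = t • (k : Amb n) := by
  obtain ⟨t, ht, k, hk, rfl⟩ := hx
  refine ⟨t, lt_of_le_of_ne ht ?_, k, hk, rfl⟩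
  rintro rfl
  simp at h

theorem interior_hcone_fst_pos {K : Set (Hyp n)} {x : Amb n} (hx : x ∈ interior (hcone K)) :
    0 < x.1 := by
  have hc : Continuous fun ε : ℝ => x + ε • ((-1, 0) : Amb n) := by fun_prop
  have e : ∀ᶠ ε in 𝓝[>] (0 : ℝ), x + ε • ((-1, 0) : Amb n) ∈ hcone K := by
    apply eventually_nhdsWithin_of_eventually_nhds
    apply hc.continuousAt.eventually_mem
    simpa using mem_interior_iff_mem_nhds.1 hx
  obtain ⟨ε, h1, h2⟩ := (e.and self_mem_nhdsWithin).exists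
  have h2 : 0 < ε := h2
  have := hcone_fst_nonneg h1
  simp at this
  linarith

/-- The boundary points of `K`, encoded through the interior of the cone over `K`. -/
def hbd (K : Set (Hyp n)) : Set (Hyp n) := {a | a ∈ K ∧ (a : Amb n) ∉ interior (hcone K)}

theorem hbd_isCompact {K : Set (Hyp n)} (hK : IsCompact K) : IsCompact (hbd K) := by
  refine hK.inter_right (t := {a : Hyp n | (a : Amb n) ∉ interior (hcone K)}) ?_
  exact (isOpen_interior.isClosed_compl).preimage continuous_subtype_val

/-- A segment from an interior point to an exterior point crosses a boundary ray. -/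
theorem exists_exit {K : Set (Hyp n)} (hK : IsCompact K) {o x : Amb n}
    (ho : o ∈ interior (hcone K)) (hx : x ∉ hcone K) (hx1 : 0 ≤ x.1) :
    ∃ s : ℝ, 0 < s ∧ s < 1 ∧ ∃ t : ℝ, 0 < t ∧ ∃ k ∈ hbd K,
      (1 - s) • o + s • x = t • (k : Amb n) := by
  have h1 : (segment ℝ o x ∩ frontier (hcone K)).Nonempty := by
    rw [(hcone_isClosed hK).frontier_eq]
    by_contra hemp
    obtain ⟨y, -, hy1, hy2⟩ := (convex_segment o x).isPreconnected (interior (hcone K))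
      (hcone K)ᶜ isOpen_interior (hcone_isClosed hK).isOpen_compl
      (fun y hy => by
        by_contra h
        rw [Set.mem_union, not_or, Set.mem_compl_iff, not_not] at h
        exact hemp ⟨y, hy, h.2, h.1⟩)
      ⟨o, left_mem_segment _ _ _, ho⟩ ⟨x, right_mem_segment _ _ _, hx⟩
    exact hy2 (interior_subset hy1)
  obtain ⟨y, ⟨r, s, hr, hs, hrs, rfl⟩, hy⟩ := h1
  rw [(hcone_isClosed hK).frontier_eq] at hy
  have hr' : r = 1 - s := by linarith
  subst hr'
  have hs0 : s ≠ 0 := by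
    rintro rfl
    apply hy.2; simpa using ho
  have hs1 : 1 - s ≠ 0 := by
    intro h
    have : s = 1 := by linarith
    subst this
    apply hx; simpa using hy.1
  have hs0 : 0 < s := lt_of_le_of_ne hs hs0.symm
  have hs1 : 0 < 1 - s := lt_of_le_of_ne hr hs1.symm
  have hpos : 0 < ((1 - s) • o + s • x).1 := by
    have := interior_hcone_fst_pos ho
    simp only [Prod.fst_add, Prod.smul_fst, smul_eq_mul]
    positivity
  obtain ⟨t, ht, k, hk, h⟩ := exists_smul_of_fst_pos hy.1 hpos
  refine ⟨s, hs0, by linarith, t, ht, k, ⟨hk, fun hk' => hy.2 ?_⟩, h⟩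
  rw [h]; exact smul_mem_interior_hcone hk' ht

/-- Every interior point is a nonnegative combination of two boundary points. -/
theorem exists_chord (hn : 2 ≤ n) {K : Set (Hyp n)} (hK : IsCompact K) {o : Amb n}
    (ho : o ∈ interior (hcone K)) :
    ∃ a ∈ hbd K, ∃ b ∈ hbd K, ∃ s t : ℝ, 0 < s ∧ 0 < t ∧ o = s • (a : Amb n) + t • (b : Amb n) := by
  have ho1 := interior_hcone_fst_pos ho
  -- a horizontal translation by more than the diameter of the slice at height `o.1` leaves the cone
  let e : EuclideanSpace ℝ (Fin n) := EuclideanSpace.single ⟨0, by omega⟩ 1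
  have he : ‖e‖ = 1 := by simp [e]
  have hout : ∀ c : ℝ, 2 * o.1 + ‖o.2‖ ≤ |c| → o + c • ((0, e) : Amb n) ∉ hcone K := by
    rintro c hc ⟨t, ht, k, -, h⟩
    have h1 : o.1 = t * k.1.1 := by simpa using congrArg Prod.fst h
    have h2 : o.2 + c • e = t • k.1.2 := by simpa using congrArg Prod.snd h
    have h3 : ‖k.1.2‖ ≤ k.1.1 :=
      abs_le_of_sq_le_sq' (by nlinarith [k.2.2]) (by linarith [k.2.1]) |>.2
    have h4 : ‖o.2 + c • e‖ ≤ o.1 := by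
      rw [h2, h1, norm_smul, Real.norm_of_nonneg ht]; gcongr
    have h5 : ‖c • e‖ = |c| := by rw [norm_smul, he, mul_one, Real.norm_eq_abs]
    have h6 := norm_sub_le (o.2 + c • e) o.2
    rw [add_sub_cancel_left, h5] at h6
    linarith
  set R := 2 * o.1 + ‖o.2‖ with hR
  have hR0 : 0 ≤ R := by positivity
  obtain ⟨s, hs, hs1, t, ht, a, ha, h1⟩ := exists_exit hK ho
    (hout R (le_abs_self R)) (by simp; linarith)
  obtain ⟨s', hs', hs1', t', ht', b, hb, h2⟩ := exists_exit hK ho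
    (hout (-R) (by rw [abs_neg]; exact le_abs_self R)) (by simp; linarith)
  refine ⟨a, ha, b, hb, s' / (s + s') * t, s / (s + s') * t', by positivity, by positivity, ?_⟩
  rw [mul_smul, mul_smul, ← h1, ← h2]
  have : s + s' ≠ 0 := by positivity
  match_scalars <;> field_simp <;> ring

/-! ### Abundance of smooth boundary points -/

/-- The boundary point nearest to an interior point is smooth, because it is touched from inside by
a ball. -/
theorem exists_smoothPt {K : Set (Hyp n)} (hK : IsCompact K) (hC : Convex ℝ (hcone K))
    {o : Hyp n} (ho : (o : Amb n) ∈ interior (hcone K)) {a : Hyp n} (ha : a ∈ hbd K)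
    (hmin : ∀ b ∈ hbd K, Bform (o : Amb n) a ≤ Bform (o : Amb n) b) :
    ∃ N, SmoothPt K a N := by
  have hoa : o ≠ a := by rintro rfl; exact ha.2 ho
  have hA := Hyp.one_lt_Bform hoa
  set A := Bform (o : Amb n) a with hAdef
  -- the open cone over the open ball around `o` with `a` on its boundary
  set G : Set (Amb n) := {y | 0 < y.1 ∧ 0 < Bform y y ∧ Bform (o : Amb n) y ^ 2 < A ^ 2 * Bform y y}
    with hG
  have hGo : IsOpen G := by
    have h1 : IsOpen {y : Amb n | 0 < y.1} := isOpen_lt (by fun_prop) (by fun_prop)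
    have h2 : IsOpen {y : Amb n | 0 < Bform y y} := isOpen_lt (by fun_prop) (by fun_prop)
    have h3 : IsOpen {y : Amb n | Bform (o : Amb n) y ^ 2 < A ^ 2 * Bform y y} :=
      isOpen_lt (by fun_prop) (by fun_prop)
    exact h1.inter (h2.inter h3)
  have hGC : G ⊆ hcone K := by
    rintro y ⟨h1, h2, h3⟩
    obtain ⟨k, hk⟩ := exists_normalize y h1 h2
    have ht : 0 < √(Bform y y) := Real.sqrt_pos.2 h2
    set t := √(Bform y y)
    rw [hk]
    refine smul_mem_hcone (mem_hcone_iff.2 ?_) ht.le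
    rw [hk] at h3
    simp only [Bform_smul_right, Bform_smul_left, k.Bform_self] at h3
    have hX1 := Hyp.one_le_Bform o k
    set X := Bform (o : Amb n) k with hX
    have hXA : X < A := by
      have h4 : (t * X) ^ 2 < (t * A) ^ 2 := by nlinarith
      have h5 := lt_of_pow_lt_pow_left₀ 2 (by positivity) h4
      exact lt_of_mul_lt_mul_left h5 ht.le
    by_contra hkK
    obtain ⟨s, hs, hs1, r, hr, b, hb, h⟩ := exists_exit hK ho (x := k)
      (fun h => hkK (mem_hcone_iff.1 h)) (by linarith [k.2.1])
    have hY := hmin b hb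
    set Y := Bform (o : Amb n) b with hYdef
    have h6 : (1 - s) + s * X = r * Y := by
      have := congrArg (Bform (o : Amb n)) h
      simpa only [Bform_add_right, Bform_smul_right, o.Bform_self, mul_one] using this
    have h7 : (1 - s) ^ 2 + s ^ 2 + 2 * s * (1 - s) * X = r ^ 2 := by
      have := congrArg (fun y => Bform y y) h
      simp only [Bform_add_right, Bform_smul_right, Bform_add_left, Bform_smul_left, b.Bform_self,
        o.Bform_self, k.Bform_self, Bform_comm (k : Amb n) o, ← hX] at this
      linarith
    have h8 : (r * X) ^ 2 < (r * Y) ^ 2 := by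
      have : X < Y := by linarith
      gcongr
    rw [← h6, mul_pow, ← h7] at h8
    have h9 : 0 ≤ (1 - s) ^ 2 * (X ^ 2 - 1) := by
      apply mul_nonneg (sq_nonneg _); nlinarith
    have h10 : 0 ≤ s * (1 - s) * X * (X ^ 2 - 1) := by
      have : 0 ≤ 1 - s := by linarith
      have : 0 ≤ X ^ 2 - 1 := by nlinarith
      positivity
    nlinarith
  have hdir : ∀ w, 0 < A * Bform w a.1 - Bform w o.1 →
      ∀ᶠ ε in 𝓝[>] (0 : ℝ), (a : Amb n) + ε • w ∈ G := by
    intro w hw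
    have e1 : ∀ᶠ ε in 𝓝 (0 : ℝ), 0 < ((a : Amb n) + ε • w).1 := by
      refine eventually_pos (f := fun ε : ℝ => ((a : Amb n) + ε • w).1) (by fun_prop) ?_
      simp; linarith [a.2.1]
    have e2 : ∀ᶠ ε in 𝓝 (0 : ℝ), 0 < Bform (a.1 + ε • w) (a.1 + ε • w) := by
      refine eventually_pos (f := fun ε : ℝ => Bform (a.1 + ε • w) (a.1 + ε • w)) (by fun_prop) ?_
      simp [a.Bform_self]
    have e3 : ∀ᶠ ε in 𝓝 (0 : ℝ), 0 < 2 * A * (A * Bform w a.1 - Bform w o.1)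
        - ε * (Bform w o.1 ^ 2 - A ^ 2 * Bform w w) := by
      refine eventually_pos (f := fun ε : ℝ => 2 * A * (A * Bform w a.1 - Bform w o.1)
        - ε * (Bform w o.1 ^ 2 - A ^ 2 * Bform w w)) (by fun_prop) ?_
      rw [zero_mul, sub_zero]; positivity
    filter_upwards [eventually_nhdsWithin_of_eventually_nhds e1,
      eventually_nhdsWithin_of_eventually_nhds e2,
      eventually_nhdsWithin_of_eventually_nhds e3, self_mem_nhdsWithin] with ε h1 h2 h3 h4
    have h4 : 0 < ε := h4
    refine ⟨h1, h2, ?_⟩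
    simp only [Bform_add_right, Bform_smul_right, Bform_add_left, Bform_smul_left, a.Bform_self,
      ← hAdef, Bform_comm (o : Amb n) w, Bform_comm (a : Amb n) w]
    have := mul_pos h4 h3
    nlinarith
  set c := (√(A ^ 2 - 1))⁻¹ with hc
  have hA2 : 0 < A ^ 2 - 1 := by nlinarith
  have hc0 : 0 < c := by rw [hc]; exact inv_pos.2 (Real.sqrt_pos.2 hA2)
  have hc2 : c ^ 2 * (A ^ 2 - 1) = 1 := by
    rw [hc, inv_pow, Real.sq_sqrt hA2.le]; field_simp
  have hBN : ∀ w, Bform w (c • (A • a.1 - o.1)) = c * (A * Bform w a.1 - Bform w o.1) := by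
    intro w; simp only [Bform_sub_right, Bform_smul_right]
  have hpos : ∀ w, 0 < Bform w (c • (A • a.1 - o.1)) →
      0 < A * Bform w a.1 - Bform w o.1 := by
    intro w hw
    rw [hBN] at hw
    exact pos_of_mul_pos_right hw hc0.le
  refine ⟨c • (A • a.1 - o.1), ha.1, ?_, ?_, ?_, ?_⟩
  · rw [hBN, a.Bform_self, Bform_comm, ← hAdef]; ring
  · rw [hBN, Bform_smul_left, Bform_smul_left, Bform_sub_left, Bform_sub_left, Bform_smul_left,
      Bform_smul_left, a.Bform_self, o.Bform_self, Bform_comm (a : Amb n) o, ← hAdef]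
    linear_combination (-1 : ℝ) * hc2
  · intro x hx
    by_contra hneg
    have h1 := hdir (-x) (hpos _ (by rw [Bform_neg_left]; linarith))
    obtain ⟨ε, h2, h3⟩ := (h1.and self_mem_nhdsWithin).exists
    have h3 : 0 < ε := h3
    have h4 : (a : Amb n) + ε • -x ∈ interior (hcone K) := interior_maximal hGC hGo h2
    have h5 := hC.combo_interior_self_mem_interior h4 hx (a := 1 / (1 + ε)) (b := ε / (1 + ε))
      (by positivity) (by positivity) (by field_simp)
    have h6 := smul_mem_interior_hcone h5 (show 0 < 1 + ε by positivity)
    apply ha.2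
    convert h6 using 1
    have : 1 + ε ≠ 0 := by positivity
    match_scalars <;> field_simp
    ring
  · intro w hw
    filter_upwards [hdir w (hpos w hw)] with ε hε
    exact hGC hε

/-- Smooth boundary points are dense in the boundary. -/
theorem hbd_subset_of_isClosed {K : Set (Hyp n)} (hK : IsCompact K) (hC : Convex ℝ (hcone K))
    (hint : (interior (hcone K)).Nonempty) {T : Set (Hyp n)} (hT : IsClosed T)
    (h : ∀ a N, SmoothPt K a N → a ∈ T) : hbd K ⊆ T := by
  intro a₀ ha₀
  by_contra haT
  have hcomp : IsCompact (hbd K ∩ T) := (hbd_isCompact hK).inter_right hT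
  have e : ∀ᶠ o in 𝓝 (a₀ : Amb n), ∀ a ∈ hbd K ∩ T, Bform o a₀ < Bform o a := by
    refine hcomp.eventually_forall_of_forall_eventually ?_
    intro a ha
    have hne : a₀ ≠ a := by rintro rfl; exact haT ha.2
    have h1 : Continuous fun p : Amb n × Hyp n => Bform p.1 a₀ := by fun_prop
    have h2 : Continuous fun p : Amb n × Hyp n => Bform p.1 p.2 := by fun_prop
    refine h1.continuousAt.eventually_lt h2.continuousAt ?_
    simpa [a₀.Bform_self] using Hyp.one_lt_Bform hne
  have hcl : (a₀ : Amb n) ∈ closure (interior (hcone K)) := by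
    rw [hC.closure_interior_eq_closure_of_nonempty_interior hint]
    exact subset_closure (mem_hcone_iff.2 ha₀.1)
  obtain ⟨o, ho, hoi⟩ := mem_closure_iff_nhds.1 hcl _ e
  obtain ⟨ρ, hρ, k, hk, rfl⟩ := exists_smul_of_fst_pos (interior_subset hoi)
    (interior_hcone_fst_pos hoi)
  have hki : (k : Amb n) ∈ interior (hcone K) := by
    have := smul_mem_interior_hcone hoi (inv_pos.2 hρ)
    rwa [smul_smul, inv_mul_cancel₀ hρ.ne', one_smul] at this
  obtain ⟨a, ha, hmin⟩ := (hbd_isCompact hK).exists_isMinOn ⟨a₀, ha₀⟩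
    (f := fun b : Hyp n => Bform (k : Amb n) b) (Continuous.continuousOn (by fun_prop))
  obtain ⟨N, hN⟩ := exists_smoothPt hK hC hki ha (fun b hb => hmin hb)
  have h1 := ho a ⟨ha, h a N hN⟩
  have h2 : Bform (k : Amb n) a ≤ Bform (k : Amb n) a₀ := hmin ha₀
  rw [Bform_smul_left, Bform_smul_left] at h1
  nlinarith

/-! ### The normals determine a sphere -/

/-- Three distinct points of the hyperboloid are affinely independent. -/
theorem Hyp.affine_indep {a b x : Hyp n} (hab : a ≠ b) (hax : a ≠ x) (hbx : b ≠ x) {α β γ : ℝ}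
    (h0 : α + β + γ = 0) (h : α • (a : Amb n) + β • (b : Amb n) + γ • (x : Amb n) = 0) :
    α = 0 ∧ β = 0 := by
  have h1 := Hyp.one_lt_Bform hab
  have h2 := Hyp.one_lt_Bform hax
  have h3 := Hyp.one_lt_Bform hbx
  have key : ∀ y : Amb n, α * Bform (a : Amb n) y + β * Bform (b : Amb n) y
      + γ * Bform (x : Amb n) y = 0 := by
    intro y
    rw [← Bform_smul_left, ← Bform_smul_left, ← Bform_smul_left, ← Bform_add_left,
      ← Bform_add_left, h, Bform]
    simp
  have ka := key a
  have kb := key b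
  have kx := key x
  rw [a.Bform_self, Bform_comm (b : Amb n) a, Bform_comm (x : Amb n) a] at ka
  rw [b.Bform_self, Bform_comm (x : Amb n) b] at kb
  rw [x.Bform_self] at kx
  obtain rfl : γ = -α - β := by linarith
  set p := Bform (a : Amb n) b
  set q := Bform (a : Amb n) x
  set r := Bform (b : Amb n) x
  have e1 : β * (p - q + r - 1) = 0 := by linarith
  have e2 : α * (q + p - r - 1) = 0 := by linarith
  by_cases hβ : β = 0
  · refine ⟨?_, hβ⟩
    have : α * (q - 1) = 0 := by rw [hβ] at kx; linarith
    rcases mul_eq_zero.1 this with h | h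
    · exact h
    · linarith
  · exfalso
    have hα : α ≠ 0 := by
      rintro rfl
      have : β * (r - 1) = 0 := by linarith
      rcases mul_eq_zero.1 this with h | h
      · exact hβ h
      · linarith
    have f1 := (mul_eq_zero.1 e1).resolve_left hβ
    have f2 := (mul_eq_zero.1 e2).resolve_left hα
    linarith

/-- With at most one smooth point, density would make the boundary a single point, and a chord
through an interior point would degenerate. -/
theorem exists_two_smoothPt (hn : 2 ≤ n) {K : Set (Hyp n)} (hK : IsCompact K)
    (hC : Convex ℝ (hcone K)) (hint : (interior (hcone K)).Nonempty) :
    ∃ a N b M, SmoothPt K a N ∧ SmoothPt K b M ∧ a ≠ b := by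
  obtain ⟨o, ho⟩ := hint
  obtain ⟨p, hp, q, hq, s, t, hs, ht, hst⟩ := exists_chord hn hK ho
  have h1 : ∃ a N, SmoothPt K a N := by
    by_contra! h
    exact hbd_subset_of_isClosed hK hC ⟨o, ho⟩ isClosed_empty (fun a N hN => h a N hN) hp
  obtain ⟨a, N, ha⟩ := h1
  by_contra! h
  have h2 : hbd K ⊆ {a} := hbd_subset_of_isClosed hK hC ⟨o, ho⟩ isClosed_singleton
    (fun b M hM => (h a N b M ha hM).symm)
  obtain rfl : p = a := h2 hp
  obtain rfl : q = p := h2 hq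
  apply hp.2
  have := smul_mem_interior_hcone ho (t := (s + t)⁻¹) (by positivity)
  rwa [hst, ← add_smul, smul_smul, inv_mul_cancel₀ (by positivity), one_smul] at this

/-- The normals at smooth points are an affine function of the foot point. -/
theorem exists_normal_affine {K : Set (Hyp n)}
    (hsym : ∀ v : Amb n, Bform v v < 0 → HConvex (hTwoPointSym v K))
    {a b : Hyp n} {N M : Amb n} (ha : SmoothPt K a N) (hb : SmoothPt K b M) (hab : a ≠ b) :
    ∃ c : ℝ, ∃ w : Amb n, ∀ x L, SmoothPt K x L → L = c • (x : Amb n) + w := by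
  have step : ∀ {a b : Hyp n} {N M : Amb n}, SmoothPt K a N → SmoothPt K b M → a ≠ b →
      ∃ r : ℝ, M - N = r • (b.1 - a.1) := by
    intro a b N M ha hb hab
    refine ⟨-(2 * Bform N (b.1 - a.1) / Bform (b.1 - a.1) (b.1 - a.1)), ?_⟩
    rw [ha.normal_eq hsym hb hab, hRefl]; module
  obtain ⟨r, hr⟩ := step ha hb hab
  refine ⟨r, N - r • (a : Amb n), fun x L hx => ?_⟩
  by_cases hxa : x = a
  · subst hxa
    rw [hb.normal_eq hsym hx hab.symm, ← hb.normal_eq hsym ha hab.symm]; module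
  by_cases hxb : x = b
  · subst hxb
    have : L = M := by rw [ha.normal_eq hsym hx hab, ← ha.normal_eq hsym hb hab]
    rw [this, eq_add_of_sub_eq hr]; module
  obtain ⟨s, hs⟩ := step hb hx (Ne.symm hxb)
  obtain ⟨q, hq⟩ := step hx ha hxa
  obtain ⟨h1, h2⟩ := Hyp.affine_indep hab (Ne.symm hxa) (Ne.symm hxb)
    (α := q - r) (β := r - s) (γ := s - q) (by ring) (by
      have : (M - N) + (L - M) + (N - L) = 0 := by abel
      rw [hr, hs, hq] at this
      rw [← this]; module)
  have hq' : q = r := by linarith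
  rw [hq'] at hq
  have : L = N - r • (a.1 - x.1) := by rw [← hq]; abel
  rw [this]; module

/-- The boundary lies in an affine hyperplane `{𝓑(·,z) = 1}`. -/
theorem exists_center (hn : 2 ≤ n) {K : Set (Hyp n)} (hK : IsCompact K)
    (hC : Convex ℝ (hcone K)) (hint : (interior (hcone K)).Nonempty)
    (hsym : ∀ v : Amb n, Bform v v < 0 → HConvex (hTwoPointSym v K)) :
    ∃ z : Amb n, ∀ a ∈ hbd K, Bform (a : Amb n) z = 1 := by
  obtain ⟨a, N, b, M, ha, hb, hab⟩ := exists_two_smoothPt hn hK hC hint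
  obtain ⟨c, w, hcw⟩ := exists_normal_affine hsym ha hb hab
  have hw : ∀ x L, SmoothPt K x L → Bform (x : Amb n) w = -c := by
    intro x L hx
    have := hx.perp
    rw [hcw x L hx, Bform_add_right, Bform_smul_right, x.Bform_self] at this
    linarith
  have hbdw : hbd K ⊆ {x : Hyp n | Bform (x : Amb n) w = -c} :=
    hbd_subset_of_isClosed hK hC hint (isClosed_eq (by fun_prop) (by fun_prop)) hw
  have hc : c ≠ 0 := by
    -- otherwise all normals agree and `K` lies in the hyperplane `{𝓑(·,w) = 0}`
    rintro rfl
    have hK0 : ∀ x ∈ hcone K, Bform x w = 0 := by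
      rintro _ ⟨t, ht, k, hk, rfl⟩
      rw [Bform_smul_left]
      by_cases hki : (k : Amb n) ∈ interior (hcone K)
      · obtain ⟨p, hp, q, hq, s, r, -, -, h⟩ := exists_chord hn hK hki
        have h1 := hbdw hp
        have h2 := hbdw hq
        simp only [Set.mem_ofPred_eq, neg_zero] at h1 h2
        rw [h, Bform_add_left, Bform_smul_left, Bform_smul_left, h1, h2]; ring
      · have h1 := hbdw (show k ∈ hbd K from ⟨hk, hki⟩)
        simp only [Set.mem_ofPred_eq, neg_zero] at h1
        rw [h1, mul_zero]
    have hNw : N = w := by rw [hcw a N ha, zero_smul, zero_add]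
    subst hNw
    have h7 := ha.dir (-N) (by rw [Bform_neg_left, ha.unit]; norm_num)
    obtain ⟨ε, h8, h9⟩ := (h7.and self_mem_nhdsWithin).exists
    have h9 : 0 < ε := h9
    have h10 := hK0 _ h8
    rw [Bform_add_left, Bform_smul_left, Bform_neg_left, ha.perp, ha.unit] at h10
    linarith
  refine ⟨(-c⁻¹) • w, fun x hx => ?_⟩
  have h1 : Bform (x : Amb n) w = -c := hbdw hx
  rw [Bform_smul_right, h1]; field_simp

/-- If the boundary lies in `{𝓑(·,z) = 1}`, then `K` is the corresponding half-space section. By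
the reversed Cauchy–Schwarz inequality `𝓑(·,z)` drops below `1` strictly inside a chord whose ends
have value at most `1`; the chord is taken between two boundary points, or from an interior point
to an exterior one. -/
theorem eq_halfspace (hn : 2 ≤ n) {K : Set (Hyp n)} (hK : IsCompact K)
    (hint : (interior (hcone K)).Nonempty) {z : Amb n}
    (hz : ∀ a ∈ hbd K, Bform (a : Amb n) z = 1) :
    K = {x : Hyp n | Bform (x : Amb n) z ≤ 1} := by
  have hsub : ∀ x ∈ K, Bform (x : Amb n) z ≤ 1 := by
    intro x hx
    by_cases hxi : (x : Amb n) ∈ interior (hcone K)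
    · obtain ⟨a, ha, b, hb, s, t, hs, ht, h⟩ := exists_chord hn hK hxi
      have h1 := x.Bform_self
      have h2 := Hyp.one_le_Bform a b
      rw [h] at h1 ⊢
      simp only [Bform_add_left, Bform_add_right, Bform_smul_left, Bform_smul_right,
        a.Bform_self, b.Bform_self, Bform_comm (b : Amb n) a, hz a ha, hz b hb] at h1 ⊢
      have : 0 ≤ s * t * (Bform (a : Amb n) b - 1) :=
        mul_nonneg (by positivity) (by linarith)
      nlinarith
    · exact (hz x ⟨hx, hxi⟩).le
  refine Set.Subset.antisymm hsub fun x hx => ?_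
  have hx : Bform (x : Amb n) z ≤ 1 := hx
  by_contra hxK
  obtain ⟨o, ho⟩ := hint
  obtain ⟨s, hs, hs1, t, ht, a, ha, h⟩ := exists_exit hK ho (x := x)
    (fun h => hxK (mem_hcone_iff.1 h)) (by linarith [x.2.1])
  obtain ⟨ρ, hρ, k, hk, rfl⟩ := exists_smul_of_fst_pos (interior_subset ho)
    (interior_hcone_fst_pos ho)
  have h1 := hsub k hk
  have hkx : k ≠ x := by rintro rfl; exact hxK hk
  have h2 := Hyp.one_lt_Bform hkx
  have h3 : (1 - s) * (ρ * Bform (k : Amb n) z) + s * Bform (x : Amb n) z = t := by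
    have := congrArg (fun y => Bform y z) h
    simpa only [Bform_add_left, Bform_smul_left, hz a ha, mul_one] using this
  have h4 : ((1 - s) * ρ) ^ 2 + s ^ 2 + 2 * s * ((1 - s) * ρ) * Bform (k : Amb n) x = t ^ 2 := by
    have := congrArg (fun y => Bform y y) h
    simp only [Bform_add_right, Bform_smul_right, Bform_add_left, Bform_smul_left, a.Bform_self,
      x.Bform_self, k.Bform_self, Bform_comm (x : Amb n) k] at this
    linarith
  have hpos : 0 < (1 - s) * ρ := mul_pos (by linarith) hρ
  have h5 : t ≤ (1 - s) * ρ + s := by nlinarith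
  have h6 : t ^ 2 ≤ ((1 - s) * ρ + s) ^ 2 := by gcongr
  have h7 : 0 < s * ((1 - s) * ρ) * (Bform (k : Amb n) x - 1) :=
    mul_pos (by positivity) (by linarith)
  nlinarith

/-- If `{𝓑(·,z) ≤ 1}` is bounded then `z` is timelike: otherwise the half-space contains a
geodesic ray in the direction of the spatial part of `z`. -/
theorem timelike_of_bounded (hn : 2 ≤ n) {z : Amb n}
    (hK : IsCompact {x : Hyp n | Bform (x : Amb n) z ≤ 1}) : 0 < Bform z z := by
  by_contra hneg
  rw [Bform_self_eq] at hneg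
  obtain ⟨R, hR⟩ := (hK.image (f := fun x : Hyp n => x.1.1) (by fun_prop)).bddAbove
  -- a unit vector along `z.2`, arbitrary when `z.2 = 0`
  obtain ⟨e, he, hze⟩ : ∃ e : EuclideanSpace ℝ (Fin n), ‖e‖ = 1 ∧ inner ℝ e z.2 = ‖z.2‖ := by
    by_cases h : z.2 = 0
    · exact ⟨EuclideanSpace.single ⟨0, by omega⟩ 1, by simp, by simp [h]⟩
    · have h' : ‖z.2‖ ≠ 0 := norm_ne_zero_iff.2 h
      refine ⟨‖z.2‖⁻¹ • z.2, by simp [norm_smul, h'], ?_⟩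
      rw [inner_smul_left, real_inner_self_eq_norm_sq]
      simp; field_simp
  set L := |R| + ‖z.2‖ + 1 with hL
  have hL1 : 1 ≤ L := by have := abs_nonneg R; have := norm_nonneg z.2; linarith
  have hsq : √(1 + L ^ 2) ^ 2 = 1 + L ^ 2 := Real.sq_sqrt (by positivity)
  have hsL : L ≤ √(1 + L ^ 2) := Real.le_sqrt_of_sq_le (by linarith)
  set T := √(1 + L ^ 2) with hT
  have hx : (1 : ℝ) ≤ T ∧ T ^ 2 - ‖L • e‖ ^ 2 = 1 := by
    refine ⟨by linarith, ?_⟩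
    rw [norm_smul, he, hsq, Real.norm_of_nonneg (by linarith)]; ring
  have hmem : Bform ((T, L • e) : Amb n) z ≤ 1 := by
    simp only [Bform, inner_smul_left, hze]
    have h1 : z.1 ≤ ‖z.2‖ := abs_le_of_sq_le_sq' (by linarith) (norm_nonneg _) |>.2
    have h2 : (T - L) * L ≤ 1 := by nlinarith
    have h3 : ‖z.2‖ ≤ L := by have := abs_nonneg R; linarith
    have h4 : T * z.1 ≤ T * ‖z.2‖ := by gcongr
    have h5 : (T - L) * ‖z.2‖ ≤ (T - L) * L := by
      apply mul_le_mul_of_nonneg_left h3; linarith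
    simp
    linarith
  have h6 : T ≤ R := hR ⟨⟨(T, L • e), hx⟩, hmem, rfl⟩
  have := le_abs_self R
  have := norm_nonneg z.2
  linarith

end

/-- a compact convex body in hyperbolic space all of whose two-point
symmetrizations are convex is a closed hyperbolic ball. -/
theorem hConvex_twoPointSym_is_ball (n : ℕ) (hn : 2 ≤ n) (K : Set (Hyp n))
    (hKcomp : IsCompact K) (hKconv : HConvex K) (hKint : (interior K).Nonempty)
    (hsym : ∀ v : Amb n, Bform v v < 0 → HConvex (hTwoPointSym v K)) :
    ∃ z : Hyp n, ∃ r : ℝ, 0 < r ∧ K = hBall z r := by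
  have hC : Convex ℝ (hcone K) := hKconv
  have hint := interior_hcone_nonempty hKint
  obtain ⟨z, hz⟩ := exists_center hn hKcomp hC hint hsym
  have hKz := eq_halfspace hn hKcomp hint hz
  have hzz : 0 < Bform z z := timelike_of_bounded hn (hKz ▸ hKcomp)
  obtain ⟨a, N, b, M, ha, hb, hab⟩ := exists_two_smoothPt hn hKcomp hC hint
  obtain ⟨o, ho⟩ := hint
  obtain ⟨p, hp, -⟩ := exists_chord hn hKcomp ho
  -- `z` is future-directed, since `𝓑(p,z) = 1 > 0`
  have hz1 : 0 < z.1 := by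
    by_contra h
    have h1 := hz p hp
    rw [Bform_self_eq] at hzz
    have h5 := neg_le_of_abs_le (abs_real_inner_le_norm p.1.2 z.2)
    have h6 : ‖z.2‖ ≤ -z.1 := abs_le_of_sq_le_sq' (by nlinarith) (by linarith) |>.2
    have h7 : ‖p.1.2‖ ≤ p.1.1 :=
      abs_le_of_sq_le_sq' (by nlinarith [p.2.2]) (by linarith [p.2.1]) |>.2
    simp only [Bform] at h1
    nlinarith [mul_le_mul h7 h6 (norm_nonneg _) (by linarith [p.2.1])]
  obtain ⟨y, hy⟩ := exists_normalize z hz1 hzz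
  have ht : 0 < √(Bform z z) := Real.sqrt_pos.2 hzz
  set t := √(Bform z z)
  have hiff : ∀ x : Hyp n, x ∈ K ↔ Bform (x : Amb n) y ≤ t⁻¹ := by
    intro x
    rw [hKz, Set.mem_ofPred_eq, hy, Bform_smul_right, inv_eq_one_div, le_div_iff₀ ht, mul_comm]
  have h1 : 1 < t⁻¹ := by
    by_contra h
    have e1 := Hyp.eq_of_Bform_le a y (((hiff a).1 ha.mem).trans (not_lt.1 h))
    have e2 := Hyp.eq_of_Bform_le b y (((hiff b).1 hb.mem).trans (not_lt.1 h))
    exact hab (e1.trans e2.symm)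
  refine ⟨y, Real.arcosh t⁻¹, Real.arcosh_pos h1, ?_⟩
  ext x
  rw [hiff, hBall, Set.mem_ofPred_eq, Real.cosh_arcosh h1.le]
end
end
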